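/- arXiv:2003.05572 — 5 statements merged into one kernel-verified Lean document; each statement's English description precedes it below -/
import Mathlib

section
/- For every x ∈ ℝⁿ, t > 0 and ε > 0 one has 0 < w_ε(x,t) ≤ 1. Moreover, for every ε > 0: if x belongs to the interior of dom J then lim_{t→0⁺} w_ε(x,t) = exp(−J(x)/ε), and if x ∉ dom J then lim_{t→0⁺} w_ε(x,t) = 0. -/
open scoped Topology
open Filter MeasureTheory

/-- The integrand `exp(−(‖x−y‖²/(2t) + J(y))/ε)`, with the convention `exp(−∞) = 0`. -/
noncomputable def heatIntegrand (n : ℕ) (J : EuclideanSpace ℝ (Fin n) → EReal)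
    (x : EuclideanSpace ℝ (Fin n)) (t ε : ℝ) (y : EuclideanSpace ℝ (Fin n)) : ℝ :=
  if J y = ⊤ then 0 else Real.exp (-((‖x - y‖ ^ 2 / (2 * t) + (J y).toReal) / ε))

/-- `w_ε(x,t) = (2πtε)^{−n/2} ∫ exp(−(‖x−y‖²/(2t) + J(y))/ε) dy`. -/
noncomputable def heatSol (n : ℕ) (J : EuclideanSpace ℝ (Fin n) → EReal)
    (x : EuclideanSpace ℝ (Fin n)) (t ε : ℝ) : ℝ :=
  (2 * Real.pi * t * ε) ^ (-(n : ℝ) / 2) * ∫ y, heatIntegrand n J x t ε y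

/-- The bounded factor `exp(-J(y)/ε)`. -/
noncomputable def expJ (n : ℕ) (J : EuclideanSpace ℝ (Fin n) → EReal) (ε : ℝ)
    (y : EuclideanSpace ℝ (Fin n)) : ℝ :=
  if J y = ⊤ then 0 else Real.exp (-((J y).toReal / ε))

lemma expJ_nonneg (n : ℕ) (J : EuclideanSpace ℝ (Fin n) → EReal) (ε : ℝ)
    (y : EuclideanSpace ℝ (Fin n)) : 0 ≤ expJ n J ε y := by
  unfold expJ; split_ifs <;> positivity

lemma expJ_le_one (n : ℕ) (J : EuclideanSpace ℝ (Fin n) → EReal) (ε : ℝ) (hε : 0 < ε)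
    (hJ : ∀ y, 0 ≤ J y) (y : EuclideanSpace ℝ (Fin n)) : expJ n J ε y ≤ 1 := by
  unfold expJ; split_ifs
  · exact zero_le_one
  · rw [Real.exp_le_one_iff]
    have := EReal.toReal_nonneg (hJ y)
    have : 0 ≤ (J y).toReal / ε := by positivity
    linarith

lemma expJ_measurable (n : ℕ) (J : EuclideanSpace ℝ (Fin n) → EReal) (ε : ℝ)
    (hJ : LowerSemicontinuous J) : Measurable (expJ n J ε) := by
  have hm : Measurable J := hJ.measurable
  unfold expJ
  refine Measurable.ite (hm (measurableSet_singleton ⊤)) measurable_const ?_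
  exact Real.measurable_exp.comp ((hm.ereal_toReal.div_const ε).neg)

lemma gauss_integral (n : ℕ) (ε : ℝ) (hε : 0 < ε) :
    ∫ z : EuclideanSpace ℝ (Fin n), Real.exp (-(‖z‖ ^ 2 / (2 * ε)))
      = (2 * Real.pi * ε) ^ ((n : ℝ) / 2) := by
  have h := GaussianFourier.integral_rexp_neg_mul_sq_norm
    (V := EuclideanSpace ℝ (Fin n)) (b := 1 / (2 * ε)) (by positivity)
  simp only [finrank_euclideanSpace, Fintype.card_fin] at h
  rw [show 2 * Real.pi * ε = Real.pi / (1 / (2 * ε)) by field_simp, ← h]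
  congr 1; ext z; congr 1; ring

lemma gauss_integrable (n : ℕ) (ε : ℝ) (hε : 0 < ε) :
    Integrable (fun z : EuclideanSpace ℝ (Fin n) => Real.exp (-(‖z‖ ^ 2 / (2 * ε)))) := by
  by_contra h
  have h1 := integral_undef h
  rw [gauss_integral n ε hε] at h1
  have : 0 < (2 * Real.pi * ε) ^ ((n : ℝ) / 2) := by positivity
  linarith

lemma heatSol_eq (n : ℕ) (J : EuclideanSpace ℝ (Fin n) → EReal)
    (x : EuclideanSpace ℝ (Fin n)) (t ε : ℝ) (ht : 0 < t) (hε : 0 < ε) :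
    heatSol n J x t ε = (2 * Real.pi * ε) ^ (-(n : ℝ) / 2) *
      ∫ z : EuclideanSpace ℝ (Fin n),
        expJ n J ε (x + √t • z) * Real.exp (-(‖z‖ ^ 2 / (2 * ε))) := by
  have hs : 0 < √t := Real.sqrt_pos.2 ht
  have e1 : ∀ z : EuclideanSpace ℝ (Fin n),
      expJ n J ε (x + √t • z) * Real.exp (-(‖z‖ ^ 2 / (2 * ε)))
        = heatIntegrand n J x t ε (x + √t • z) := by
    intro z
    unfold expJ heatIntegrand
    split_ifs
    · simp
    · rw [← Real.exp_add]
      congr 1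
      have : ‖x - (x + √t • z)‖ ^ 2 = t * ‖z‖ ^ 2 := by
        rw [sub_add_cancel_left, norm_neg, norm_smul, mul_pow, Real.norm_of_nonneg hs.le,
          Real.sq_sqrt ht.le]
      rw [this]
      field_simp
      ring
  simp_rw [e1]
  have e2 := Measure.integral_comp_smul (volume : Measure (EuclideanSpace ℝ (Fin n)))
    (fun y => heatIntegrand n J x t ε (x + y)) (√t)
  rw [e2, integral_add_left_eq_self (fun y => heatIntegrand n J x t ε y) x]
  unfold heatSol
  rw [smul_eq_mul, ← mul_assoc, finrank_euclideanSpace, Fintype.card_fin]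
  congr 1
  rw [abs_of_pos (by positivity), show 2 * Real.pi * t * ε = (2 * Real.pi * ε) * t by ring,
    Real.mul_rpow (by positivity) ht.le, Real.sqrt_eq_rpow, ← Real.rpow_natCast,
    ← Real.rpow_mul ht.le, ← Real.rpow_neg ht.le]
  congr 2; ring

lemma prod_integrable (n : ℕ) (J : EuclideanSpace ℝ (Fin n) → EReal)
    (hl : LowerSemicontinuous J) (hJ : ∀ y, 0 ≤ J y)
    (x : EuclideanSpace ℝ (Fin n)) (s ε : ℝ) (hε : 0 < ε) :
    Integrable (fun z : EuclideanSpace ℝ (Fin n) =>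
        expJ n J ε (x + s • z) * Real.exp (-(‖z‖ ^ 2 / (2 * ε)))) := by
  refine (gauss_integrable n ε hε).bdd_mul (c := 1) ?_ ?_
  · exact ((expJ_measurable n J ε hl).comp (by fun_prop)).aestronglyMeasurable
  · filter_upwards with z
    rw [Real.norm_of_nonneg (expJ_nonneg ..)]
    exact expJ_le_one n J ε hε hJ _

lemma heatSol_tendsto (n : ℕ) (J : EuclideanSpace ℝ (Fin n) → EReal)
    (hl : LowerSemicontinuous J) (hJ : ∀ y, 0 ≤ J y)
    (x : EuclideanSpace ℝ (Fin n)) (ε : ℝ) (hε : 0 < ε)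
    (hc : ContinuousAt (expJ n J ε) x) :
    Tendsto (fun t => heatSol n J x t ε) (𝓝[>] (0 : ℝ)) (𝓝 (expJ n J ε x)) := by
  have key : Tendsto (fun t : ℝ => ∫ z : EuclideanSpace ℝ (Fin n),
        expJ n J ε (x + √t • z) * Real.exp (-(‖z‖ ^ 2 / (2 * ε)))) (𝓝[>] (0 : ℝ))
      (𝓝 (∫ z : EuclideanSpace ℝ (Fin n),
        expJ n J ε x * Real.exp (-(‖z‖ ^ 2 / (2 * ε))))) := by
    refine tendsto_integral_filter_of_dominated_convergence
      (fun z => Real.exp (-(‖z‖ ^ 2 / (2 * ε)))) ?_ ?_ (gauss_integrable n ε hε) ?_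
    · exact Eventually.of_forall fun t =>
        (prod_integrable n J hl hJ x (√t) ε hε).aestronglyMeasurable
    · refine Eventually.of_forall fun t => Eventually.of_forall fun z => ?_
      rw [norm_mul, Real.norm_of_nonneg (expJ_nonneg ..), Real.norm_of_nonneg (Real.exp_nonneg _)]
      exact mul_le_of_le_one_left (Real.exp_nonneg _) (expJ_le_one n J ε hε hJ _)
    · refine Eventually.of_forall fun z => Tendsto.mul_const _ ?_
      refine hc.tendsto.comp ?_
      have : Continuous fun t : ℝ => x + √t • z := by fun_prop
      have h := this.tendsto 0
      simp only [Real.sqrt_zero, zero_smul, add_zero] at h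
      exact h.mono_left nhdsWithin_le_nhds
  have key2 := key.const_mul ((2 * Real.pi * ε) ^ (-(n : ℝ) / 2))
  rw [integral_const_mul, gauss_integral n ε hε, mul_left_comm, ← Real.rpow_add (by positivity),
    neg_div, neg_add_cancel, Real.rpow_zero, mul_one] at key2
  refine key2.congr' ?_
  filter_upwards [self_mem_nhdsWithin] with t ht
  rw [heatSol_eq n J x t ε ht hε, neg_div]

/-- For every `x`, `t > 0`, `ε > 0` one has `0 < w_ε(x,t) ≤ 1`; moreover, for every
`ε > 0`, `lim_{t→0⁺} w_ε(x,t) = exp(−J(x)/ε)` when `x ∈ int(dom J)`, and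
`lim_{t→0⁺} w_ε(x,t) = 0` when `x ∉ dom J`. -/
theorem heatSol_bounds_and_initial_limits (n : ℕ) (hn : 1 ≤ n)
    (J : EuclideanSpace ℝ (Fin n) → EReal)
    (hJ_proper_bot : ∀ y, J y ≠ ⊥)
    (hJ_lsc : LowerSemicontinuous J)
    (hJ_convex : ∀ y₁ y₂ : EuclideanSpace ℝ (Fin n), ∀ a b : ℝ, 0 ≤ a → 0 ≤ b → a + b = 1 →
      J (a • y₁ + b • y₂) ≤ (a : EReal) * J y₁ + (b : EReal) * J y₂)
    (hJ_int : (interior {y : EuclideanSpace ℝ (Fin n) | J y ≠ ⊤}).Nonempty)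
    (hJ_inf : (⨅ y : EuclideanSpace ℝ (Fin n), J y) = (0 : EReal)) :
    (∀ (x : EuclideanSpace ℝ (Fin n)) (t ε : ℝ), 0 < t → 0 < ε →
      0 < heatSol n J x t ε ∧ heatSol n J x t ε ≤ 1) ∧
    (∀ (x : EuclideanSpace ℝ (Fin n)) (ε : ℝ), 0 < ε →
      x ∈ interior {y : EuclideanSpace ℝ (Fin n) | J y ≠ ⊤} →
      Tendsto (fun t => heatSol n J x t ε) (𝓝[>] (0 : ℝ))
        (𝓝 (Real.exp (-(J x).toReal / ε)))) ∧
    (∀ (x : EuclideanSpace ℝ (Fin n)) (ε : ℝ), 0 < ε → J x = ⊤ →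
      Tendsto (fun t => heatSol n J x t ε) (𝓝[>] (0 : ℝ)) (𝓝 0)) := by
  have hJ : ∀ y, 0 ≤ J y := fun y => hJ_inf ▸ iInf_le J y
  refine ⟨fun x t ε ht hε => ⟨?_, ?_⟩, fun x ε hε hx => ?_, fun x ε hε hx => ?_⟩
  · rw [heatSol_eq n J x t ε ht hε]
    refine mul_pos (by positivity) ?_
    rw [integral_pos_iff_support_of_nonneg
      (fun z => mul_nonneg (expJ_nonneg ..) (Real.exp_nonneg _))
      (prod_integrable n J hJ_lsc hJ x (√t) ε hε)]
    have hs : 0 < √t := Real.sqrt_pos.2 ht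
    have ho : IsOpen ((fun z : EuclideanSpace ℝ (Fin n) => x + √t • z) ⁻¹'
        (interior {y : EuclideanSpace ℝ (Fin n) | J y ≠ ⊤})) :=
      isOpen_interior.preimage (by fun_prop)
    refine lt_of_lt_of_le (ho.measure_pos volume ?_) (measure_mono ?_)
    · obtain ⟨y, hy⟩ := hJ_int
      refine ⟨(√t)⁻¹ • (y - x), ?_⟩
      simpa [smul_smul, hs.ne'] using hy
    · intro z hz
      have h := interior_subset hz
      simp only [Set.mem_ofPred_eq] at h
      simp [Function.mem_support, expJ, h]
  · rw [heatSol_eq n J x t ε ht hε]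
    calc _ ≤ (2 * Real.pi * ε) ^ (-(n : ℝ) / 2) * (2 * Real.pi * ε) ^ ((n : ℝ) / 2) := by
          refine mul_le_mul_of_nonneg_left ?_ (by positivity)
          rw [← gauss_integral n ε hε]
          refine integral_mono (prod_integrable n J hJ_lsc hJ x (√t) ε hε)
            (gauss_integrable n ε hε) fun z => ?_
          exact mul_le_of_le_one_left (Real.exp_nonneg _) (expJ_le_one n J ε hε hJ _)
      _ = 1 := by
          rw [← Real.rpow_add (by positivity), neg_div, neg_add_cancel, Real.rpow_zero]
  · have hfin : ∀ y ∈ interior {y : EuclideanSpace ℝ (Fin n) | J y ≠ ⊤},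
        ((J y).toReal : EReal) = J y := fun y hy =>
      EReal.coe_toReal (interior_subset hy) (hJ_proper_bot y)
    have hle : ∀ y₁ y₂ : EuclideanSpace ℝ (Fin n), J y₁ ≠ ⊤ → J y₂ ≠ ⊤ →
        ∀ a b : ℝ, 0 ≤ a → 0 ≤ b → a + b = 1 →
        J (a • y₁ + b • y₂) ≤ ((a * (J y₁).toReal + b * (J y₂).toReal : ℝ) : EReal) := by
      intro y₁ y₂ h1 h2 a b ha hb hab
      have := hJ_convex y₁ y₂ a b ha hb hab
      rw [← EReal.coe_toReal h1 (hJ_proper_bot y₁), ← EReal.coe_toReal h2 (hJ_proper_bot y₂)] at this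
      exact_mod_cast this
    have hconv : Convex ℝ {y : EuclideanSpace ℝ (Fin n) | J y ≠ ⊤} := by
      intro y₁ h1 y₂ h2 a b ha hb hab
      exact ne_top_of_le_ne_top (EReal.coe_ne_top _) (hle y₁ y₂ h1 h2 a b ha hb hab)
    have hcv : ConvexOn ℝ (interior {y : EuclideanSpace ℝ (Fin n) | J y ≠ ⊤})
        (fun y => (J y).toReal) := by
      refine ⟨hconv.interior, fun y₁ h1 y₂ h2 a b ha hb hab => ?_⟩
      have h := hle y₁ y₂ (interior_subset h1) (interior_subset h2) a b ha hb hab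
      rw [← hfin _ (hconv.interior h1 h2 ha hb hab)] at h
      exact_mod_cast h
    have hcont : ContinuousAt (fun y => (J y).toReal) x :=
      (hcv.continuousOn isOpen_interior).continuousAt (isOpen_interior.mem_nhds hx)
    have hx' : J x ≠ ⊤ := interior_subset hx
    have hc : ContinuousAt (expJ n J ε) x := by
      have h2 : ContinuousAt (fun y => Real.exp (-((J y).toReal / ε))) x :=
        Real.continuous_exp.continuousAt.comp (hcont.div_const ε).neg
      refine h2.congr ?_
      filter_upwards [isOpen_interior.mem_nhds hx] with y hy
      have hy' : J y ≠ ⊤ := interior_subset hy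
      simp [expJ, hy']
    have h := heatSol_tendsto n J hJ_lsc hJ x ε hε hc
    rw [expJ, if_neg hx', ← neg_div] at h
    exact h
  · have h0 : expJ n J ε x = 0 := by simp [expJ, hx]
    have hc : ContinuousAt (expJ n J ε) x := by
      rw [ContinuousAt, h0]
      refine tendsto_order.2 ⟨fun a ha => Eventually.of_forall fun y =>
        ha.trans_le (expJ_nonneg ..), fun a ha => ?_⟩
      have hlt : ((-(ε * Real.log a) : ℝ) : EReal) < J x := by
        rw [hx]; exact EReal.coe_lt_top _
      filter_upwards [hJ_lsc x _ hlt] with y hy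
      unfold expJ
      split_ifs with h
      · exact ha
      · rw [← Real.lt_log_iff_exp_lt ha]
        rw [← EReal.coe_toReal h (hJ_proper_bot y), gt_iff_lt, EReal.coe_lt_coe_iff] at hy
        rw [neg_lt, lt_div_iff₀ hε]
        linarith
    have h := heatSol_tendsto n J hJ_lsc hJ x ε hε hc
    rwa [h0] at h
end

section
/- For every ε > 0, the function (x,t) ↦ t^{n/2} w_ε(x,t) is jointly log-concave on ℝⁿ × (0,+∞): for all x₁, x₂ ∈ ℝⁿ, t₁, t₂ > 0 and λ ∈ (0,1), one has (λt₁+(1−λ)t₂)^{n/2} w_ε(λx₁+(1−λ)x₂, λt₁+(1−λ)t₂) ≥ (t₁^{n/2} w_ε(x₁,t₁))^λ (t₂^{n/2} w_ε(x₂,t₂))^{1−λ}. -/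
open scoped Topology
open Filter MeasureTheory

lemma bm_one {l : ℝ} (h0 : 0 < l) (h1 : l < 1) {A B C : Set ℝ} (hA : MeasurableSet A)
    (hB : MeasurableSet B) (nA : A.Nonempty) (nB : B.Nonempty)
    (hC : ∀ a ∈ A, ∀ b ∈ B, l * a + (1 - l) * b ∈ C) :
    ENNReal.ofReal l * volume A + ENNReal.ofReal (1 - l) * volume B ≤ volume C := by
  have key : ∀ K L : Set ℝ, K ⊆ A → IsCompact K → L ⊆ B → IsCompact L →
      ENNReal.ofReal l * volume K + ENNReal.ofReal (1 - l) * volume L ≤ volume C := by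
    have key' : ∀ K L : Set ℝ, K ⊆ A → IsCompact K → K.Nonempty → L ⊆ B → IsCompact L →
        L.Nonempty → 
        ENNReal.ofReal l * volume K + ENNReal.ofReal (1 - l) * volume L ≤ volume C := by
      intro K L hK cK nK hL cL nL
      obtain ⟨M, hM, hM'⟩ := cK.exists_isGreatest nK
      obtain ⟨m, hm, hm'⟩ := cL.exists_isLeast nL
      set P : Set ℝ := (fun a => l * a + (1 - l) * m) '' K with hP
      set Q : Set ℝ := (fun b => (1 - l) * b + l * M) '' L with hQ
      have vol : ∀ (c d : ℝ) (S : Set ℝ), 0 < c →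
          volume ((fun a => c * a + d) '' S) = ENNReal.ofReal c * volume S := by
        intro c d S hc
        have : (fun a => c * a + d) '' S = (fun x => x + d) '' ((fun x => c • x) '' S) := by
          rw [Set.image_image]; rfl
        rw [this]
        simp only [Set.image_smul, Set.image_add_right, measure_preimage_add_right]
        rw [Measure.addHaar_smul]
        simp [abs_of_pos hc]
      have vP : volume P = ENNReal.ofReal l * volume K := vol _ _ _ h0
      have vQ : volume Q = ENNReal.ofReal (1 - l) * volume L := vol _ _ _ (by linarith)
      have cQ : IsCompact Q := cL.image (by fun_prop)
      rw [← vP, ← vQ, ← measure_union₀ cQ.measurableSet.nullMeasurableSet]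
      · apply measure_mono
        rintro z (⟨a, ha, rfl⟩ | ⟨b, hb, rfl⟩)
        · exact hC a (hK ha) m (hL hm)
        · have := hC M (hK hM) b (hL hb)
          rw [add_comm] at this
          exact this
      · refine measure_mono_null (t := {l * M + (1 - l) * m}) ?_ (by simp)
        rintro z ⟨⟨a, ha, rfl⟩, ⟨b, hb, hab⟩⟩
        have e1 : l * a ≤ l * M := mul_le_mul_of_nonneg_left (hM' ha) h0.le
        have e2 : (1 - l) * m ≤ (1 - l) * b := mul_le_mul_of_nonneg_left (hm' hb) (by linarith)
        simp only [Set.mem_singleton_iff] at hab ⊢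
        linarith
    intro K L hK cK hL cL
    obtain ⟨a, ha⟩ := nA
    obtain ⟨b, hb⟩ := nB
    refine le_trans ?_ (key' (insert a K) (insert b L) (Set.insert_subset ha hK) (cK.insert a)
      (Set.insert_nonempty _ _) (Set.insert_subset hb hL) (cL.insert b) (Set.insert_nonempty _ _))
    gcongr <;> exact Set.subset_insert _ _
  rw [hA.measure_eq_iSup_isCompact, hB.measure_eq_iSup_isCompact]
  simp only [ENNReal.mul_iSup]
  have e : ∀ (c : ENNReal) (A : Set ℝ), (⨆ K, ⨆ (_ : K ⊆ A), ⨆ (_ : IsCompact K), c * volume K)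
      = ⨆ K, ⨆ (_ : K ⊆ A ∧ IsCompact K), c * volume K := by
    intro c A
    simp only [iSup_and]
  rw [e, e]
  refine ENNReal.biSup_add_biSup_le' ⟨∅, by simp⟩ ⟨∅, by simp⟩ ?_
  rintro K ⟨hK, cK⟩ L ⟨hL, cL⟩
  exact key K L hK cK hL cL

lemma pl_one_real {l : ℝ} (h0 : 0 < l) (h1 : l < 1) {f g h : ℝ → ℝ} (hf : Measurable f)
    (hg : Measurable g) (hh : Measurable h) (f0 : ∀ x, 0 ≤ f x) (g0 : ∀ x, 0 ≤ g x)
    (hh0 : ∀ x, 0 ≤ h x)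
    (f1 : ∀ x, f x ≤ 1) (g1 : ∀ x, g x ≤ 1) (sf : ∀ s < 1, ∃ x, s < f x)
    (sg : ∀ s < 1, ∃ x, s < g x)
    (H : ∀ x y, f x ^ l * g y ^ (1 - l) ≤ h (l * x + (1 - l) * y)) :
    ENNReal.ofReal l * (∫⁻ x, ENNReal.ofReal (f x)) +
      ENNReal.ofReal (1 - l) * (∫⁻ x, ENNReal.ofReal (g x)) ≤ ∫⁻ x, ENNReal.ofReal (h x) := by
  rw [lintegral_eq_lintegral_meas_lt _ (.of_forall f0) hf.aemeasurable,
    lintegral_eq_lintegral_meas_lt _ (.of_forall g0) hg.aemeasurable,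
    lintegral_eq_lintegral_meas_lt _ (.of_forall hh0) hh.aemeasurable]
  have mono : ∀ f : ℝ → ℝ, Measurable fun t => volume {a | t < f a} := by
    intro f
    apply Antitone.measurable
    intro s t hst
    exact measure_mono fun a (ha : t < f a) => lt_of_le_of_lt hst ha
  rw [← lintegral_const_mul _ (mono f), ← lintegral_const_mul _ (mono g),
    ← lintegral_add_left ((mono f).const_mul _)]
  apply setLIntegral_mono (mono h)
  intro s hs
  rcases lt_or_ge s 1 with hs1 | hs1
  · apply bm_one h0 h1 (measurableSet_lt measurable_const hf) (measurableSet_lt measurable_const hg)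
      (sf s hs1) (sg s hs1)
    intro a ha b hb
    refine lt_of_lt_of_le ?_ (H a b)
    have hs : 0 < s := hs
    have : s = s ^ l * s ^ (1 - l) := by
      rw [← Real.rpow_add hs]; simp
    rw [this]
    have hb : s < g b := hb
    have ha : s < f a := ha
    apply mul_lt_mul'' (Real.rpow_lt_rpow hs.le ha h0)
      (Real.rpow_lt_rpow hs.le hb (by linarith)) <;> positivity
  · have e : ∀ f : ℝ → ℝ, (∀ x, f x ≤ 1) → {a | s < f a} = ∅ := by
      intro f hf
      ext a
      simp only [Set.mem_ofPred_eq, Set.mem_empty_iff_false, iff_false, not_lt]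
      exact (hf a).trans hs1
    rw [e f f1, e g g1]; simp

lemma amgm {l : ℝ} (h0 : 0 < l) (h1 : l < 1) (a b : ENNReal) :
    a ^ l * b ^ (1 - l) ≤ ENNReal.ofReal l * a + ENNReal.ofReal (1 - l) * b := by
  have hl : 0 < 1 - l := by linarith
  have h := ENNReal.young_inequality (a ^ l) (b ^ (1 - l)) (p := 1 / l) (q := 1 / (1 - l)) (by
    rw [Real.holderConjugate_iff]; constructor
    · rw [lt_div_iff₀ h0]; linarith
    · simp)
  rw [← ENNReal.rpow_mul, ← ENNReal.rpow_mul, mul_one_div_cancel h0.ne', mul_one_div_cancel hl.ne',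
    ENNReal.rpow_one, ENNReal.rpow_one, one_div, one_div, ENNReal.ofReal_inv_of_pos h0,
    ENNReal.ofReal_inv_of_pos hl, div_eq_mul_inv, div_eq_mul_inv, inv_inv, inv_inv] at h
  rwa [mul_comm a, mul_comm b] at h

lemma pl_one_bdd {l : ℝ} (h0 : 0 < l) (h1 : l < 1) {f g h : ℝ → ENNReal} (hf : Measurable f)
    (hg : Measurable g) (hh : Measurable h)
    (f1 : (⨆ x, f x) ≠ ⊤) (g1 : (⨆ x, g x) ≠ ⊤)
    (H : ∀ x y, f x ^ l * g y ^ (1 - l) ≤ h (l * x + (1 - l) * y)) :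
    (∫⁻ x, f x) ^ l * (∫⁻ x, g x) ^ (1 - l) ≤ ∫⁻ x, h x := by
  have hl : 0 < 1 - l := by linarith
  set A := ⨆ x, f x with hA
  set B := ⨆ x, g x with hB
  have fA : ∀ x, f x ≤ A := fun x => le_iSup f x
  have gB : ∀ x, g x ≤ B := fun x => le_iSup g x
  by_cases A0 : A = 0
  · have : ∀ x, f x = 0 := fun x => by simpa [A0] using fA x
    simp [this, h0]
  by_cases B0 : B = 0
  · have : ∀ x, g x = 0 := fun x => by simpa [B0] using gB x
    simp [this, hl]
  set C := A ^ l * B ^ (1 - l) with hC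
  have C0 : C ≠ 0 := by
    apply mul_ne_zero <;> simp [ENNReal.rpow_eq_zero_iff, A0, B0, f1, g1]
  have CT : C ≠ ⊤ := ENNReal.mul_ne_top (by simp [A0, f1, h0.le]) (by simp [B0, g1, hl.le])
  have q : ∀ (f : ℝ → ENNReal) (A : ENNReal), (∀ x, f x ≤ A) → A ≠ 0 → A ≠ ⊤ → ∀ x, f x / A ≤ 1 :=
    fun f A h a0 aT x => ENNReal.div_le_of_le_mul (by simpa using h x)
  have sq : ∀ (f : ℝ → ENNReal) (A : ENNReal), A = ⨆ x, f x → (∀ x, f x ≤ A) → A ≠ 0 → A ≠ ⊤ →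
      ∀ s < (1:ℝ), ∃ x, s < (f x / A).toReal := by
    intro f A h hA a0 aT s hs
    rcases lt_or_ge s 0 with hs0 | hs0
    · exact ⟨0, lt_of_lt_of_le hs0 ENNReal.toReal_nonneg⟩
    have : ENNReal.ofReal s * A < ⨆ x, f x := by
      rw [← h]
      calc _ < 1 * A := by
            rw [ENNReal.mul_lt_mul_iff_left a0 aT]
            simpa using hs
        _ = A := one_mul A
    obtain ⟨x, hx⟩ := lt_iSup_iff.1 this
    refine ⟨x, ?_⟩
    rw [← ENNReal.ofReal_lt_iff_lt_toReal hs0 (ne_top_of_le_ne_top (by simp) (q f A hA a0 aT x))]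
    rwa [ENNReal.lt_div_iff_mul_lt (Or.inl a0) (Or.inl aT)]
  have key := pl_one_real h0 h1 (f := fun x => (f x / A).toReal) (g := fun x => (g x / B).toReal)
    (h := fun x => (min (h x / C) 1).toReal) (by fun_prop) (by fun_prop) (by fun_prop)
    (fun _ => ENNReal.toReal_nonneg) (fun _ => ENNReal.toReal_nonneg)
    (fun _ => ENNReal.toReal_nonneg)
    (fun x => ENNReal.toReal_le_of_le_ofReal one_pos.le (by simpa using q f A fA A0 f1 x))
    (fun x => ENNReal.toReal_le_of_le_ofReal one_pos.le (by simpa using q g B gB B0 g1 x))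
    (sq f A hA fA A0 f1) (sq g B hB gB B0 g1) (by
      intro x y
      rw [ENNReal.toReal_rpow, ENNReal.toReal_rpow, ← ENNReal.toReal_mul]
      apply ENNReal.toReal_mono (by simp)
      apply le_min
      · rw [ENNReal.div_rpow_of_nonneg _ _ h0.le, ENNReal.div_rpow_of_nonneg _ _ hl.le,
          ENNReal.le_div_iff_mul_le (Or.inl C0) (Or.inl CT)]
        refine le_trans (le_of_eq ?_) (H x y)
        rw [hC, div_eq_mul_inv, div_eq_mul_inv]
        have e1 : (A ^ l)⁻¹ * A ^ l = 1 := ENNReal.inv_mul_cancel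
          (by simp [ENNReal.rpow_eq_zero_iff, A0, f1]) (by simp [A0, f1, h0.le])
        have e2 : (B ^ (1-l))⁻¹ * B ^ (1-l) = 1 := ENNReal.inv_mul_cancel
          (by simp [ENNReal.rpow_eq_zero_iff, B0, g1]) (by simp [B0, g1, hl.le])
        calc _ = f x ^ l * g y ^ (1-l) * ((A ^ l)⁻¹ * A ^ l) * ((B ^ (1-l))⁻¹ * B ^ (1-l)) := by ring
          _ = _ := by rw [e1, e2]; simp
      · exact mul_le_one' (ENNReal.rpow_le_one (q f A fA A0 f1 x) h0.le)
          (ENNReal.rpow_le_one (q g B gB B0 g1 y) hl.le))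
  have r1 : ∀ x, ENNReal.ofReal (f x / A).toReal = f x * A⁻¹ := fun x =>
    ENNReal.ofReal_toReal (ne_top_of_le_ne_top (by simp) (q f A fA A0 f1 x))
  have r2 : ∀ x, ENNReal.ofReal (g x / B).toReal = g x * B⁻¹ := fun x =>
    ENNReal.ofReal_toReal (ne_top_of_le_ne_top (by simp) (q g B gB B0 g1 x))
  have r3 : ∀ x, ENNReal.ofReal (min (h x / C) 1).toReal ≤ h x * C⁻¹ := fun x =>
    ENNReal.ofReal_toReal_le.trans (min_le_left _ _)
  simp only [r1, r2] at key
  have key := ((amgm h0 h1 _ _).trans key).trans (lintegral_mono r3)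
  rw [lintegral_mul_const _ hf, lintegral_mul_const _ hg, lintegral_mul_const _ hh,
    ← div_eq_mul_inv, ← div_eq_mul_inv, ← div_eq_mul_inv,
    ENNReal.le_div_iff_mul_le (Or.inl C0) (Or.inl CT),
    ENNReal.div_rpow_of_nonneg _ _ h0.le, ENNReal.div_rpow_of_nonneg _ _ hl.le] at key
  refine le_trans (le_of_eq ?_) key
  rw [hC, div_eq_mul_inv, div_eq_mul_inv]
  have e1 : (A ^ l)⁻¹ * A ^ l = 1 := ENNReal.inv_mul_cancel
    (by simp [ENNReal.rpow_eq_zero_iff, A0, f1]) (by simp [A0, f1, h0.le])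
  have e2 : (B ^ (1-l))⁻¹ * B ^ (1-l) = 1 := ENNReal.inv_mul_cancel
    (by simp [ENNReal.rpow_eq_zero_iff, B0, g1]) (by simp [B0, g1, hl.le])
  symm
  calc _ = (∫⁻ x, f x) ^ l * (∫⁻ x, g x) ^ (1-l) * ((A ^ l)⁻¹ * A ^ l) * ((B ^ (1-l))⁻¹ * B ^ (1-l)) := by ring
    _ = _ := by rw [e1, e2]; simp

def PLProp (E : Type) [AddCommGroup E] [Module ℝ E] [MeasureSpace E] : Prop :=
  ∀ l : ℝ, 0 < l → l < 1 → ∀ f g h : E → ENNReal, Measurable f → Measurable g → Measurable h →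
    (∀ x y, f x ^ l * g y ^ (1 - l) ≤ h (l • x + (1 - l) • y)) →
    (∫⁻ x, f x) ^ l * (∫⁻ x, g x) ^ (1 - l) ≤ ∫⁻ x, h x

lemma pl_real : PLProp ℝ := by
  intro l h0 h1 f g h hf hg hh H
  have hl : 0 < 1 - l := by linarith
  have tr : ∀ f : ℝ → ENNReal, Measurable f → ∀ p : ℝ, 0 < p →
      (∫⁻ x, f x) ^ p = ⨆ k : ℕ, (∫⁻ x, min (f x) k) ^ p := by
    intro f hf p hp
    have : ∫⁻ x, f x = ⨆ k : ℕ, ∫⁻ x, min (f x) k := by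
      rw [← lintegral_iSup (fun k => by fun_prop)]
      · congr with x
        rw [← inf_iSup_eq, ENNReal.iSup_natCast]; simp
      · intro i j hij x
        dsimp only
        gcongr
    rw [this]
    exact (ENNReal.orderIsoRpow p hp).map_iSup _
  rw [tr f hf l h0, tr g hg _ hl]
  simp only [ENNReal.iSup_mul, ENNReal.mul_iSup]
  refine iSup_le fun k => iSup_le fun j => ?_
  have bd : ∀ (f : ℝ → ENNReal) (k : ℕ), (⨆ x, min (f x) (k : ENNReal)) ≠ ⊤ := fun f k =>
    ne_top_of_le_ne_top (ENNReal.natCast_ne_top k) (iSup_le fun x => min_le_right _ _)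
  refine pl_one_bdd h0 h1 (by fun_prop) (by fun_prop) hh (bd _ _) (bd _ _) fun x y =>
    le_trans ?_ (H x y)
  gcongr <;> exact min_le_left _ _

lemma pl_prod {E F : Type} [AddCommGroup E] [Module ℝ E] [MeasureSpace E] [AddCommGroup F]
    [Module ℝ F] [MeasureSpace F] [SFinite (volume : Measure F)] (hE : PLProp E) (hF : PLProp F)
    [SFinite (volume : Measure E)] :
    PLProp (E × F) := by
  intro l h0 h1 f g h hf hg hh H
  rw [Measure.volume_eq_prod, lintegral_prod _ hf.aemeasurable, lintegral_prod _ hg.aemeasurable,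
    lintegral_prod _ hh.aemeasurable]
  refine hE l h0 h1 _ _ _ hf.lintegral_prod_right' hg.lintegral_prod_right'
    hh.lintegral_prod_right' fun x y => ?_
  exact hF l h0 h1 _ _ _ (by fun_prop) (by fun_prop) (by fun_prop) fun u v => H (x, u) (y, v)

lemma pl_transfer {E F : Type} [AddCommGroup E] [Module ℝ E] [MeasureSpace E] [AddCommGroup F]
    [Module ℝ F] [MeasureSpace F] (hE : PLProp E) (e : E → F) (he : MeasurePreserving e)
    (ha : ∀ (a b : ℝ) x y, e (a • x + b • y) = a • e x + b • e y) : PLProp F := by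
  intro l h0 h1 f g h hf hg hh H
  rw [← he.lintegral_comp hf, ← he.lintegral_comp hg, ← he.lintegral_comp hh]
  refine hE l h0 h1 _ _ _ (hf.comp he.measurable) (hg.comp he.measurable) (hh.comp he.measurable)
    fun x y => ?_
  rw [ha]; exact H _ _

lemma pl_pi : ∀ n : ℕ, PLProp (Fin n → ℝ)
  | 0 => by
    intro l h0 h1 f g h hf hg hh H
    have : (volume : Measure (Fin 0 → ℝ)) = Measure.dirac 0 := by
      rw [volume_pi]; exact Measure.pi_of_empty _ _
    rw [this]
    simp only [lintegral_dirac]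
    convert H 0 0 using 2
  | n + 1 => by
    refine pl_transfer (pl_prod pl_real (pl_pi n)) _
      (volume_preserving_piFinSuccAbove (fun _ : Fin (n+1) => ℝ) 0).symm ?_
    intro a b x y
    ext i
    refine Fin.cases ?_ (fun j => ?_) i <;> simp [MeasurableEquiv.piFinSuccAbove]

lemma pl_euclidean (n : ℕ) : PLProp (EuclideanSpace ℝ (Fin n)) :=
  pl_transfer (pl_pi n) (WithLp.toLp 2) (PiLp.volume_preserving_toLp _) fun _ _ _ _ => rfl

lemma sq_div_convex {p q s t l m : ℝ} (hs : 0 < s) (ht : 0 < t) (hl : 0 < l) (hm : 0 < m) :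
    (l * p + m * q) ^ 2 / (l * s + m * t) ≤ l * (p ^ 2 / s) + m * (q ^ 2 / t) := by
  rw [div_le_iff₀ (by positivity)]
  have : (l * (p ^ 2 / s) + m * (q ^ 2 / t)) * (l * s + m * t) - (l * p + m * q) ^ 2
      = l * m * (p * t - q * s) ^ 2 / (s * t) := by
    field_simp
    ring
  have h2 : 0 ≤ l * m * (p * t - q * s) ^ 2 / (s * t) := by positivity
  linarith

lemma heat_nonneg (n : ℕ) (J : EuclideanSpace ℝ (Fin n) → EReal)
    (x : EuclideanSpace ℝ (Fin n)) (t ε : ℝ) (y : EuclideanSpace ℝ (Fin n)) :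
    0 ≤ heatIntegrand n J x t ε y := by
  unfold heatIntegrand
  split_ifs
  · exact le_rfl
  · positivity

lemma heat_meas (n : ℕ) (J : EuclideanSpace ℝ (Fin n) → EReal) (hJ : Measurable J)
    (x : EuclideanSpace ℝ (Fin n)) (t ε : ℝ) : Measurable (heatIntegrand n J x t ε) := by
  unfold heatIntegrand
  refine Measurable.ite (hJ (measurableSet_singleton ⊤)) measurable_const ?_
  have : Measurable fun y => (J y).toReal := hJ.ereal_toReal
  fun_prop

lemma heat_integrable (n : ℕ) (J : EuclideanSpace ℝ (Fin n) → EReal) (hJ : Measurable J)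
    (h0 : ∀ y, 0 ≤ J y) (x : EuclideanSpace ℝ (Fin n)) {t ε : ℝ} (ht : 0 < t) (hε : 0 < ε) :
    Integrable (heatIntegrand n J x t ε) := by
  have g : Integrable fun y : EuclideanSpace ℝ (Fin n) =>
      Real.exp (-(1 / (2 * t * ε)) * ‖y‖ ^ 2) := by
    have := (GaussianFourier.integrable_cexp_neg_mul_sq_norm_add
      (V := EuclideanSpace ℝ (Fin n)) (b := ((1 / (2 * t * ε) : ℝ) : ℂ)) (by
        rw [Complex.ofReal_re]; positivity) 0 0).norm
    refine this.congr (.of_forall fun y => ?_)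
    simp only [Complex.norm_exp]
    congr 1
    simp [← Complex.ofReal_pow, ← Complex.ofReal_mul, -Complex.ofReal_inv]
  refine (g.comp_sub_left x).mono' (heat_meas n J hJ x t ε).aestronglyMeasurable
    (.of_forall fun y => ?_)
  rw [Real.norm_of_nonneg (heat_nonneg _ _ _ _ _ _)]
  unfold heatIntegrand
  split_ifs
  · positivity
  · apply Real.exp_le_exp.2
    have e : -(1 / (2 * t * ε)) * ‖x - y‖ ^ 2 = -((‖x - y‖ ^ 2 / (2 * t)) / ε) := by
      field_simp
    rw [e]
    have := EReal.toReal_nonneg (h0 y)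
    gcongr
    linarith

lemma heat_pointwise (n : ℕ) (J : EuclideanSpace ℝ (Fin n) → EReal)
    (h0 : ∀ y, 0 ≤ J y)
    (hJ_convex : ∀ y₁ y₂ : EuclideanSpace ℝ (Fin n), ∀ a b : ℝ, 0 ≤ a → 0 ≤ b → a + b = 1 →
      J (a • y₁ + b • y₂) ≤ (a : EReal) * J y₁ + (b : EReal) * J y₂)
    (ε : ℝ) (hε : 0 < ε)
    (x₁ x₂ : EuclideanSpace ℝ (Fin n)) (t₁ t₂ : ℝ) (ht₁ : 0 < t₁) (ht₂ : 0 < t₂)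
    (l : ℝ) (hl : 0 < l) (hl1 : l < 1) (u v : EuclideanSpace ℝ (Fin n)) :
    heatIntegrand n J x₁ t₁ ε u ^ l * heatIntegrand n J x₂ t₂ ε v ^ (1 - l) ≤
      heatIntegrand n J (l • x₁ + (1 - l) • x₂) (l * t₁ + (1 - l) * t₂) ε
        (l • u + (1 - l) • v) := by
  have hm : 0 < 1 - l := by linarith
  by_cases hu : J u = ⊤
  · have : heatIntegrand n J x₁ t₁ ε u = 0 := by simp [heatIntegrand, hu]
    rw [this, Real.zero_rpow hl.ne', zero_mul]
    exact heat_nonneg _ _ _ _ _ _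
  by_cases hv : J v = ⊤
  · have : heatIntegrand n J x₂ t₂ ε v = 0 := by simp [heatIntegrand, hv]
    rw [this, Real.zero_rpow hm.ne', mul_zero]
    exact heat_nonneg _ _ _ _ _ _
  have nb : ∀ y, J y ≠ ⊥ := fun y h => by
    have := h0 y
    simp [h] at this
  have c := hJ_convex u v l (1 - l) hl.le hm.le (by ring)
  rw [← EReal.coe_toReal hu (nb u), ← EReal.coe_toReal hv (nb v), ← EReal.coe_mul, ← EReal.coe_mul,
    ← EReal.coe_add] at c
  have hw : J (l • u + (1 - l) • v) ≠ ⊤ := ne_top_of_le_ne_top (EReal.coe_ne_top _) c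
  rw [← EReal.coe_toReal hw (nb _), EReal.coe_le_coe_iff] at c
  simp only [heatIntegrand, hu, hv, hw, if_false]
  rw [← Real.exp_mul, ← Real.exp_mul, ← Real.exp_add, Real.exp_le_exp]
  have d : ‖l • x₁ + (1 - l) • x₂ - (l • u + (1 - l) • v)‖ ≤
      l * ‖x₁ - u‖ + (1 - l) * ‖x₂ - v‖ := by
    have : l • x₁ + (1 - l) • x₂ - (l • u + (1 - l) • v) =
        l • (x₁ - u) + (1 - l) • (x₂ - v) := by module
    rw [this]
    refine (norm_add_le _ _).trans (le_of_eq ?_)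
    rw [norm_smul, norm_smul, Real.norm_of_nonneg hl.le, Real.norm_of_nonneg hm.le]
  have k : ‖l • x₁ + (1 - l) • x₂ - (l • u + (1 - l) • v)‖ ^ 2 /
        (2 * (l * t₁ + (1 - l) * t₂)) ≤
      l * (‖x₁ - u‖ ^ 2 / (2 * t₁)) + (1 - l) * (‖x₂ - v‖ ^ 2 / (2 * t₂)) := by
    calc _ ≤ (l * ‖x₁ - u‖ + (1 - l) * ‖x₂ - v‖) ^ 2 / (2 * (l * t₁ + (1 - l) * t₂)) := by
          gcongr
      _ = (l * ‖x₁ - u‖ + (1 - l) * ‖x₂ - v‖) ^ 2 / (l * (2 * t₁) + (1 - l) * (2 * t₂)) := by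
          congr 1; ring
      _ ≤ _ := sq_div_convex (by positivity) (by positivity) hl hm
  have f : ∀ a b : ℝ, -(a / ε) * l + -(b / ε) * (1 - l) = -((l * a + (1 - l) * b) / ε) := by
    intro a b; ring
  rw [f, neg_le_neg_iff]
  apply div_le_div_of_nonneg_right _ hε.le
  linarith

theorem heatSol_jointly_log_concave (n : ℕ) (hn : 1 ≤ n)
    (J : EuclideanSpace ℝ (Fin n) → EReal)
    (hJ_proper_bot : ∀ y, J y ≠ ⊥)
    (hJ_lsc : LowerSemicontinuous J)
    (hJ_convex : ∀ y₁ y₂ : EuclideanSpace ℝ (Fin n), ∀ a b : ℝ, 0 ≤ a → 0 ≤ b → a + b = 1 →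
      J (a • y₁ + b • y₂) ≤ (a : EReal) * J y₁ + (b : EReal) * J y₂)
    (hJ_int : (interior {y : EuclideanSpace ℝ (Fin n) | J y ≠ ⊤}).Nonempty)
    (hJ_inf : (⨅ y : EuclideanSpace ℝ (Fin n), J y) = (0 : EReal))
    (ε : ℝ) (hε : 0 < ε)
    (x₁ x₂ : EuclideanSpace ℝ (Fin n)) (t₁ t₂ : ℝ) (ht₁ : 0 < t₁) (ht₂ : 0 < t₂)
    (lam : ℝ) (hlam₀ : 0 < lam) (hlam₁ : lam < 1) :
    (lam * t₁ + (1 - lam) * t₂) ^ ((n : ℝ) / 2)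
        * heatSol n J (lam • x₁ + (1 - lam) • x₂) (lam * t₁ + (1 - lam) * t₂) ε
      ≥ (t₁ ^ ((n : ℝ) / 2) * heatSol n J x₁ t₁ ε) ^ lam
        * (t₂ ^ ((n : ℝ) / 2) * heatSol n J x₂ t₂ ε) ^ (1 - lam) := by
  have hm : 0 < 1 - lam := by linarith
  have h0 : ∀ y, 0 ≤ J y := fun y => hJ_inf ▸ iInf_le J y
  have hJm : Measurable J := hJ_lsc.measurable
  set t := lam * t₁ + (1 - lam) * t₂ with ht
  have tpos : 0 < t := by positivity
  set x := lam • x₁ + (1 - lam) • x₂ with hx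
  set c : ℝ := (2 * Real.pi * ε) ^ (-(n : ℝ) / 2) with hc
  have cpos : 0 < c := by positivity
  have red : ∀ x t, 0 < t → t ^ ((n : ℝ) / 2) * heatSol n J x t ε
      = c * ∫ y, heatIntegrand n J x t ε y := by
    intro x t ht
    unfold heatSol
    have e1 : 2 * Real.pi * t * ε = t * (2 * Real.pi * ε) := by ring
    rw [e1, Real.mul_rpow ht.le (by positivity), ← mul_assoc, ← mul_assoc, ← Real.rpow_add ht]
    have : (n : ℝ) / 2 + -(n : ℝ) / 2 = 0 := by ring
    rw [this, Real.rpow_zero, one_mul]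
  rw [red x t tpos, red x₁ t₁ ht₁, red x₂ t₂ ht₂]
  have I0 : ∀ x t, 0 ≤ ∫ y, heatIntegrand n J x t ε y := fun x t =>
    integral_nonneg fun y => heat_nonneg _ _ _ _ _ _
  rw [Real.mul_rpow cpos.le (I0 _ _), Real.mul_rpow cpos.le (I0 _ _)]
  have cc : c ^ lam * c ^ (1 - lam) = c := by
    rw [← Real.rpow_add cpos]; simp
  have key := pl_euclidean n lam hlam₀ hlam₁
    (fun y => ENNReal.ofReal (heatIntegrand n J x₁ t₁ ε y))
    (fun y => ENNReal.ofReal (heatIntegrand n J x₂ t₂ ε y))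
    (fun y => ENNReal.ofReal (heatIntegrand n J x t ε y))
    (heat_meas n J hJm x₁ t₁ ε).ennreal_ofReal
    (heat_meas n J hJm x₂ t₂ ε).ennreal_ofReal
    (heat_meas n J hJm x t ε).ennreal_ofReal (by
      intro u v
      rw [ENNReal.ofReal_rpow_of_nonneg (heat_nonneg _ _ _ _ _ _) hlam₀.le,
        ENNReal.ofReal_rpow_of_nonneg (heat_nonneg _ _ _ _ _ _) hm.le,
        ← ENNReal.ofReal_mul (Real.rpow_nonneg (heat_nonneg _ _ _ _ _ _) _)]
      exact ENNReal.ofReal_le_ofReal (heat_pointwise n J h0 hJ_convex ε hε x₁ x₂ t₁ t₂ ht₁ ht₂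
        lam hlam₀ hlam₁ u v))
  have L : ∀ x t, 0 < t → ∫⁻ y, ENNReal.ofReal (heatIntegrand n J x t ε y)
      = ENNReal.ofReal (∫ y, heatIntegrand n J x t ε y) := fun x t ht =>
    (ofReal_integral_eq_lintegral_ofReal (heat_integrable n J hJm h0 x ht hε)
      (.of_forall fun y => heat_nonneg _ _ _ _ _ _)).symm
  rw [L _ _ tpos, L _ _ ht₁, L _ _ ht₂, ENNReal.ofReal_rpow_of_nonneg (I0 _ _) hlam₀.le,
    ENNReal.ofReal_rpow_of_nonneg (I0 _ _) hm.le,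
    ← ENNReal.ofReal_mul (Real.rpow_nonneg (I0 _ _) _), ENNReal.ofReal_le_ofReal_iff (I0 _ _)] at key
  calc _ = (c ^ lam * c ^ (1 - lam)) * ((∫ y, heatIntegrand n J x₁ t₁ ε y) ^ lam *
        (∫ y, heatIntegrand n J x₂ t₂ ε y) ^ (1 - lam)) := by ring
    _ ≤ _ := by rw [cc]; gcongr
end

section
/- For every t > 0 and ε > 0, the function x ↦ exp(‖x‖²/(2tε)) w_ε(x,t) is strictly log-convex on ℝⁿ; equivalently, the function x ↦ ½‖x‖² − t S_ε(x,t) is strictly convex on ℝⁿ. -/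
open scoped Topology
open Filter MeasureTheory

/-- `S_ε(x,t) = −ε ln w_ε(x,t)`. -/
noncomputable def viscSol (n : ℕ) (J : EuclideanSpace ℝ (Fin n) → EReal)
    (x : EuclideanSpace ℝ (Fin n)) (t ε : ℝ) : ℝ :=
  -ε * Real.log (heatSol n J x t ε)

theorem heat_aux_eq (n : ℕ) (J : EuclideanSpace ℝ (Fin n) → EReal)
    (t ε : ℝ) (ht : 0 < t) (hε : 0 < ε) (x y : EuclideanSpace ℝ (Fin n)) :
    Real.exp (‖x‖ ^ 2 / (2 * t * ε)) * heatIntegrand n J x t ε y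
      = Real.exp (inner ℝ x y / (t * ε)) * heatIntegrand n J 0 t ε y := by
  unfold heatIntegrand
  split_ifs with h
  · simp
  · rw [← Real.exp_add, ← Real.exp_add, norm_sub_sq_real, zero_sub, norm_neg]
    congr 1
    field_simp
    ring

theorem heat_aux_integrable (n : ℕ) (J : EuclideanSpace ℝ (Fin n) → EReal)
    (hJ_lsc : LowerSemicontinuous J) (hJ0 : ∀ y, 0 ≤ J y)
    (t ε : ℝ) (ht : 0 < t) (hε : 0 < ε) (x : EuclideanSpace ℝ (Fin n)) :
    Integrable (heatIntegrand n J x t ε) := by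
  have hm : Measurable J := hJ_lsc.measurable
  have hg : Integrable (fun y : EuclideanSpace ℝ (Fin n) =>
      Real.exp (-(1 / (2 * t * ε)) * ‖y‖ ^ 2)) := by
    have h := GaussianFourier.integrable_cexp_neg_mul_sq_norm_add (V := EuclideanSpace ℝ (Fin n))
      (b := ((1 / (2 * t * ε) : ℝ) : ℂ)) (by rw [Complex.ofReal_re]; positivity) 0 0
    have h2 := h.norm
    refine h2.congr (Eventually.of_forall fun y => ?_)
    simp only [Complex.norm_exp]
    congr 1
    simp only [zero_mul, add_zero]
    norm_cast
  have hg2 := hg.comp_sub_left x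
  refine hg2.mono' ?_ (Eventually.of_forall fun y => ?_)
  · apply Measurable.aestronglyMeasurable
    unfold heatIntegrand
    refine Measurable.ite (hm (measurableSet_singleton _)) measurable_const ?_
    have : Measurable fun y => (J y).toReal := hm.ereal_toReal
    fun_prop
  · unfold heatIntegrand
    split_ifs with h
    · simp; positivity
    · rw [Real.norm_of_nonneg (Real.exp_pos _).le]
      apply Real.exp_le_exp.mpr
      have h1 : 0 ≤ (J y).toReal := EReal.toReal_nonneg (hJ0 y)
      have h2 : 0 ≤ (J y).toReal / ε := by positivity
      have h3 : (‖x - y‖ ^ 2 / (2 * t) + (J y).toReal) / ε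
        = (1 / (2 * t * ε)) * ‖x - y‖ ^ 2 + (J y).toReal / ε := by field_simp
      rw [h3]; linarith

theorem heat_aux_nonneg (n : ℕ) (J : EuclideanSpace ℝ (Fin n) → EReal)
    (t ε : ℝ) (x y : EuclideanSpace ℝ (Fin n)) : 0 ≤ heatIntegrand n J x t ε y := by
  unfold heatIntegrand; split_ifs <;> positivity

theorem heat_aux_pos (n : ℕ) (J : EuclideanSpace ℝ (Fin n) → EReal)
    (t ε : ℝ) (x y : EuclideanSpace ℝ (Fin n)) (h : J y ≠ ⊤) :
    0 < heatIntegrand n J x t ε y := by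
  unfold heatIntegrand; rw [if_neg h]; positivity

theorem integral_pos_aux {n : ℕ} {f : EuclideanSpace ℝ (Fin n) → ℝ} (hf : Integrable f)
    (h0 : ∀ y, 0 ≤ f y) (U : Set (EuclideanSpace ℝ (Fin n))) (hU : IsOpen U) (hne : U.Nonempty)
    (hpos : ∀ y ∈ U, 0 < f y) : 0 < ∫ y, f y := by
  rw [integral_pos_iff_support_of_nonneg h0 hf]
  exact (hU.measure_pos volume hne).trans_le (measure_mono fun y hy => (hpos y hy).ne')

theorem open_aux {n : ℕ} (U : Set (EuclideanSpace ℝ (Fin n))) (hU : IsOpen U) (hne : U.Nonempty)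
    (d : EuclideanSpace ℝ (Fin n)) (hd : d ≠ 0) (c : ℝ) :
    IsOpen (U ∩ {y | inner ℝ d y ≠ c}) ∧ (U ∩ {y | inner ℝ d y ≠ c}).Nonempty := by
  refine ⟨hU.inter (isOpen_ne_fun (by fun_prop) continuous_const), ?_⟩
  obtain ⟨y, hy⟩ := hne
  by_cases hc : inner ℝ d y = c
  · have hcont : Tendsto (fun s : ℝ => y + s • d) (𝓝[≠] 0) (𝓝 y) := by
      have : Continuous (fun s : ℝ => y + s • d) := by fun_prop
      have h := this.tendsto 0
      simp only [zero_smul, add_zero] at h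
      exact h.mono_left nhdsWithin_le_nhds
    obtain ⟨s, hs, hs0⟩ := ((hcont.eventually (hU.mem_nhds hy)).and self_mem_nhdsWithin).exists
    refine ⟨_, hs, ?_⟩
    simp only [Set.mem_setOf_eq, inner_add_right, inner_smul_right, hc, real_inner_self_eq_norm_sq]
    have : s * ‖d‖ ^ 2 ≠ 0 := mul_ne_zero hs0 (pow_ne_zero _ (norm_ne_zero_iff.mpr hd))
    simpa using ⟨hs0, hd⟩
  · exact ⟨y, hy, hc⟩

/-- For every `t > 0` and `ε > 0`, `x ↦ exp(‖x‖²/(2tε)) w_ε(x,t)` is strictly log-convex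
on `ℝⁿ`; equivalently, `x ↦ ½‖x‖² − t S_ε(x,t)` is strictly convex on `ℝⁿ`. -/
theorem heatSol_strictly_log_convex (n : ℕ) (hn : 1 ≤ n)
    (J : EuclideanSpace ℝ (Fin n) → EReal)
    (hJ_proper_bot : ∀ y, J y ≠ ⊥)
    (hJ_lsc : LowerSemicontinuous J)
    (hJ_convex : ∀ y₁ y₂ : EuclideanSpace ℝ (Fin n), ∀ a b : ℝ, 0 ≤ a → 0 ≤ b → a + b = 1 →
      J (a • y₁ + b • y₂) ≤ (a : EReal) * J y₁ + (b : EReal) * J y₂)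
    (hJ_int : (interior {y : EuclideanSpace ℝ (Fin n) | J y ≠ ⊤}).Nonempty)
    (hJ_inf : (⨅ y : EuclideanSpace ℝ (Fin n), J y) = (0 : EReal))
    (t ε : ℝ) (ht : 0 < t) (hε : 0 < ε) :
    StrictConvexOn ℝ Set.univ
      (fun x : EuclideanSpace ℝ (Fin n) =>
        Real.log (Real.exp (‖x‖ ^ 2 / (2 * t * ε)) * heatSol n J x t ε)) ∧
    StrictConvexOn ℝ Set.univ
      (fun x : EuclideanSpace ℝ (Fin n) => ‖x‖ ^ 2 / 2 - t * viscSol n J x t ε) := by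
  have hJ0 : ∀ y, 0 ≤ J y := fun y => hJ_inf ▸ iInf_le J y
  set U := interior {y : EuclideanSpace ℝ (Fin n) | J y ≠ ⊤} with hUdef
  have hU : IsOpen U := isOpen_interior
  have hUtop : ∀ y ∈ U, J y ≠ ⊤ := fun y hy => interior_subset hy
  set h : EuclideanSpace ℝ (Fin n) → ℝ := heatIntegrand n J 0 t ε with hh
  set g : EuclideanSpace ℝ (Fin n) → EuclideanSpace ℝ (Fin n) → ℝ :=
    fun x y => Real.exp (inner ℝ x y / (t * ε)) * h y with hg
  have hh0 : ∀ y, 0 ≤ h y := heat_aux_nonneg n J t ε 0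
  have hhp : ∀ y ∈ U, 0 < h y := fun y hy => heat_aux_pos n J t ε 0 y (hUtop y hy)
  have hgI : ∀ x, Integrable (g x) := fun x =>
    ((heat_aux_integrable n J hJ_lsc hJ0 t ε ht hε x).const_mul
      (Real.exp (‖x‖ ^ 2 / (2 * t * ε)))).congr
      (Eventually.of_forall fun y => heat_aux_eq n J t ε ht hε x y)
  set F : EuclideanSpace ℝ (Fin n) → ℝ := fun x => ∫ y, g x y with hF
  have hFpos : ∀ x, 0 < F x := fun x =>
    integral_pos_aux (hgI x) (fun y => mul_nonneg (Real.exp_pos _).le (hh0 y)) U hU hJ_int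
      (fun y hy => mul_pos (Real.exp_pos _) (hhp y hy))
  set C : ℝ := (2 * Real.pi * t * ε) ^ (-(n : ℝ) / 2) with hC
  have hCpos : 0 < C := by have := Real.pi_pos; positivity
  have hw : ∀ x, Real.exp (‖x‖ ^ 2 / (2 * t * ε)) * heatSol n J x t ε = C * F x := by
    intro x
    have : F x = Real.exp (‖x‖ ^ 2 / (2 * t * ε)) * ∫ y, heatIntegrand n J x t ε y := by
      rw [← integral_const_mul]
      exact integral_congr_ae (Eventually.of_forall fun y => (heat_aux_eq n J t ε ht hε x y).symm)
    rw [this, heatSol]; ring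
  have key : StrictConvexOn ℝ Set.univ
      (fun x : EuclideanSpace ℝ (Fin n) =>
        Real.log (Real.exp (‖x‖ ^ 2 / (2 * t * ε)) * heatSol n J x t ε)) := by
    refine ⟨convex_univ, ?_⟩
    intro x₁ _ x₂ _ hne a b ha hb hab
    simp only [hw, smul_eq_mul]
    rw [Real.log_mul hCpos.ne' (hFpos _).ne', Real.log_mul hCpos.ne' (hFpos _).ne',
      Real.log_mul hCpos.ne' (hFpos _).ne']
    suffices hs : Real.log (F (a • x₁ + b • x₂)) < a * Real.log (F x₁) + b * Real.log (F x₂) by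
      have : a * Real.log C + b * Real.log C = Real.log C := by rw [← add_mul, hab, one_mul]
      linarith
    set L₁ := Real.log (F x₁) with hL₁
    set L₂ := Real.log (F x₂) with hL₂
    have he1 : Real.exp (-L₁) * F x₁ = 1 := by
      rw [Real.exp_neg, hL₁, Real.exp_log (hFpos _), inv_mul_cancel₀ (hFpos _).ne']
    have he2 : Real.exp (-L₂) * F x₂ = 1 := by
      rw [Real.exp_neg, hL₂, Real.exp_log (hFpos _), inv_mul_cancel₀ (hFpos _).ne']
    set G : EuclideanSpace ℝ (Fin n) → ℝ := fun y =>
      a * (Real.exp (-L₁) * g x₁ y) + b * (Real.exp (-L₂) * g x₂ y)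
        - Real.exp (-(a * L₁ + b * L₂)) * g (a • x₁ + b • x₂) y with hG
    have i1 := ((hgI x₁).const_mul (Real.exp (-L₁))).const_mul a
    have i2 := ((hgI x₂).const_mul (Real.exp (-L₂))).const_mul b
    have i3 := (hgI (a • x₁ + b • x₂)).const_mul (Real.exp (-(a * L₁ + b * L₂)))
    have i12 : Integrable (fun y => a * (Real.exp (-L₁) * g x₁ y)
      + b * (Real.exp (-L₂) * g x₂ y)) := i1.add i2
    have hGI : Integrable G := i12.sub i3
    have hGint : ∫ y, G y = 1 - Real.exp (-(a * L₁ + b * L₂)) * F (a • x₁ + b • x₂) := by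
      rw [hG, integral_sub i12 i3, integral_add i1 i2]
      simp only [integral_const_mul]
      change a * (Real.exp (-L₁) * F x₁) + b * (Real.exp (-L₂) * F x₂) - _ = _
      rw [he1, he2, mul_one, mul_one, hab]
    have hGeq : ∀ y, G y = (a * Real.exp (inner ℝ x₁ y / (t * ε) - L₁)
        + b * Real.exp (inner ℝ x₂ y / (t * ε) - L₂)
        - Real.exp (a * (inner ℝ x₁ y / (t * ε) - L₁) + b * (inner ℝ x₂ y / (t * ε) - L₂)))
        * h y := by
      intro y
      have e3 : a * (inner ℝ x₁ y / (t * ε) - L₁) + b * (inner ℝ x₂ y / (t * ε) - L₂)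
        = -(a * L₁ + b * L₂) + inner ℝ (a • x₁ + b • x₂) y / (t * ε) := by
        rw [inner_add_left, real_inner_smul_left, real_inner_smul_left]; ring
      rw [e3, sub_eq_neg_add _ L₁, sub_eq_neg_add _ L₂, Real.exp_add, Real.exp_add, Real.exp_add]
      simp only [hG, hg]; ring
    have hG0 : ∀ y, 0 ≤ G y := by
      intro y
      rw [hGeq]
      refine mul_nonneg ?_ (hh0 y)
      have := convexOn_exp.2 (Set.mem_univ (inner ℝ x₁ y / (t * ε) - L₁))
        (Set.mem_univ (inner ℝ x₂ y / (t * ε) - L₂)) ha.le hb.le hab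
      simp only [smul_eq_mul] at this
      linarith
    obtain ⟨hVo, hVne⟩ := open_aux U hU hJ_int (x₁ - x₂) (sub_ne_zero.mpr hne)
      ((L₁ - L₂) * (t * ε))
    have hGpos : 0 < ∫ y, G y := by
      refine integral_pos_aux hGI hG0 _ hVo hVne ?_
      rintro y ⟨hyU, hy⟩
      rw [hGeq]
      refine mul_pos ?_ (hhp y hyU)
      have hne' : inner ℝ x₁ y / (t * ε) - L₁ ≠ inner ℝ x₂ y / (t * ε) - L₂ := by
        intro heq
        apply hy
        rw [inner_sub_left]
        field_simp at heq
        linarith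
      have := strictConvexOn_exp.2 (Set.mem_univ (inner ℝ x₁ y / (t * ε) - L₁))
        (Set.mem_univ (inner ℝ x₂ y / (t * ε) - L₂)) hne' ha hb hab
      simp only [smul_eq_mul] at this
      linarith
    rw [hGint] at hGpos
    rw [Real.log_lt_iff_lt_exp (hFpos _)]
    have hE := Real.exp_pos (a * L₁ + b * L₂)
    rw [Real.exp_neg] at hGpos
    have : (Real.exp (a * L₁ + b * L₂))⁻¹ * F (a • x₁ + b • x₂) < 1 := by linarith
    rwa [inv_mul_lt_iff₀ hE, mul_one] at this
  refine ⟨key, ?_⟩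
  have hwpos : ∀ x, 0 < heatSol n J x t ε := fun x => by
    have : 0 < Real.exp (‖x‖ ^ 2 / (2 * t * ε)) * heatSol n J x t ε := by
      rw [hw]; exact mul_pos hCpos (hFpos x)
    exact (pos_iff_pos_of_mul_pos this).mp (Real.exp_pos _)
  have heq : ∀ x : EuclideanSpace ℝ (Fin n), ‖x‖ ^ 2 / 2 - t * viscSol n J x t ε
      = (t * ε) * Real.log (Real.exp (‖x‖ ^ 2 / (2 * t * ε)) * heatSol n J x t ε) := by
    intro x
    rw [Real.log_mul (Real.exp_pos _).ne' (hwpos x).ne', Real.log_exp, viscSol]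
    field_simp
    ring
  refine ⟨convex_univ, ?_⟩
  intro x₁ h₁ x₂ h₂ hne a b ha hb hab
  have := key.2 h₁ h₂ hne ha hb hab
  simp only [heq, smul_eq_mul] at this ⊢
  have := mul_lt_mul_of_pos_left this (mul_pos ht hε)
  linarith
end

section
/- For every x ∈ ℝⁿ and t > 0, the posterior mean estimate converges to the MAP estimate in the vanishing-noise limit: lim_{ε→0⁺} u_PM(x,t,ε) = u_MAP(x,t), where u_MAP(x,t) is the unique minimizer of y ↦ ‖x−y‖²/(2t) + J(y) over ℝⁿ. -/
open scoped Topology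
open Filter MeasureTheory

/-- The partition function `Z_J(x,t,ε) = ∫ exp(−(‖x−y‖²/(2t) + J(y))/ε) dy`. -/
noncomputable def partitionFn (n : ℕ) (J : EuclideanSpace ℝ (Fin n) → EReal)
    (x : EuclideanSpace ℝ (Fin n)) (t ε : ℝ) : ℝ :=
  ∫ y, heatIntegrand n J x t ε y

/-- The posterior mean estimate `u_PM(x,t,ε) = E_J[y]`. -/
noncomputable def postMean (n : ℕ) (J : EuclideanSpace ℝ (Fin n) → EReal)
    (x : EuclideanSpace ℝ (Fin n)) (t ε : ℝ) : EuclideanSpace ℝ (Fin n) :=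
  (partitionFn n J x t ε)⁻¹ • ∫ y, heatIntegrand n J x t ε y • y

lemma aux_gauss (n : ℕ) (c : ℝ) (hc : 0 < c) (u : EuclideanSpace ℝ (Fin n)) :
    Integrable (fun y : EuclideanSpace ℝ (Fin n) => Real.exp (-(c * ‖y - u‖ ^ 2))) := by
  have h := (GaussianFourier.integrable_cexp_neg_mul_sq_norm_add (V := EuclideanSpace ℝ (Fin n))
    (b := (c : ℂ)) (by simpa using hc) 0 0).norm
  have h2 := h.comp_sub_right u
  refine h2.congr (Eventually.of_forall fun y => ?_)
  simp only [Complex.norm_exp]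
  congr 1
  simp [← Complex.ofReal_pow]

lemma aux_gauss1 (n : ℕ) (c : ℝ) (hc : 0 < c) (u : EuclideanSpace ℝ (Fin n)) :
    Integrable (fun y : EuclideanSpace ℝ (Fin n) => ‖y - u‖ * Real.exp (-(c * ‖y - u‖ ^ 2))) := by
  refine ((aux_gauss n (c / 2) (by positivity) u).const_mul (1 + 2 / c)).mono'
    (by fun_prop) (Eventually.of_forall fun y => ?_)
  rw [Real.norm_of_nonneg (by positivity)]
  set v := ‖y - u‖ with hv
  have hv0 : 0 ≤ v := norm_nonneg _
  have h1 : v ≤ (1 + 2 / c) * Real.exp (c / 2 * v ^ 2) := by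
    have := Real.add_one_le_exp (c / 2 * v ^ 2)
    have h2 : (1 + 2 / c) * (c / 2 * v ^ 2 + 1) = c / 2 * v ^ 2 + 1 + v ^ 2 + 2 / c := by
      field_simp
      ring
    have h3 : (1 + 2 / c) * (c / 2 * v ^ 2 + 1) ≤ (1 + 2 / c) * Real.exp (c / 2 * v ^ 2) := by
      gcongr
    have : 0 ≤ c / 2 * v ^ 2 := by positivity
    have : 0 < 2 / c := by positivity
    nlinarith [sq_nonneg (v - 1)]
  have h4 : Real.exp (-(c / 2 * v ^ 2))
      = Real.exp (c / 2 * v ^ 2) * Real.exp (-(c * v ^ 2)) := by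
    rw [← Real.exp_add]; congr 1; ring
  rw [h4, ← mul_assoc]
  gcongr

lemma aux_core (n : ℕ) (D : Set (EuclideanSpace ℝ (Fin n))) (hD : MeasurableSet D)
    (G : EuclideanSpace ℝ (Fin n) → ℝ) (hG : Measurable G) (u : EuclideanSpace ℝ (Fin n))
    (c : ℝ) (hc : 0 < c) (hGc : ∀ y ∈ D, c * ‖y - u‖ ^ 2 ≤ G y)
    (hpos : ∀ η > 0, 0 < volume {y | y ∈ D ∧ G y ≤ η}) :
    Tendsto (fun ε : ℝ => (∫ y, D.indicator (fun y => Real.exp (-(G y / ε))) y)⁻¹ •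
      ∫ y, D.indicator (fun y => Real.exp (-(G y / ε))) y • y) (𝓝[>] (0 : ℝ)) (𝓝 u) := by
  set p : ℝ → EuclideanSpace ℝ (Fin n) → ℝ :=
    fun ε y => D.indicator (fun y => Real.exp (-(G y / ε))) y with hp
  have hpm : ∀ ε, Measurable (p ε) := fun ε =>
    Measurable.indicator (by fun_prop) hD
  have hp0 : ∀ ε y, 0 ≤ p ε y := fun ε y =>
    Set.indicator_nonneg (fun _ _ => (Real.exp_pos _).le) _
  have hpb : ∀ ε > 0, ∀ y, p ε y ≤ Real.exp (-(c / ε * ‖y - u‖ ^ 2)) := by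
    intro ε hε y
    by_cases hy : y ∈ D
    · simp only [hp, Set.indicator_of_mem hy]
      have := hGc y hy
      have h2 : c * ‖y - u‖ ^ 2 / ε ≤ G y / ε := by gcongr
      apply Real.exp_le_exp.2
      have h3 : c / ε * ‖y - u‖ ^ 2 = c * ‖y - u‖ ^ 2 / ε := by ring
      linarith
    · simp only [hp, Set.indicator_of_notMem hy]
      positivity
  have hpi : ∀ ε > 0, Integrable (p ε) := fun ε hε =>
    (aux_gauss n (c / ε) (by positivity) u).mono' (hpm ε).aestronglyMeasurable
      (Eventually.of_forall fun y => by
        rw [Real.norm_of_nonneg (hp0 ε y)]; exact hpb ε hε y)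
  have hpi1 : ∀ ε > 0, Integrable (fun y => p ε y • (y - u)) := fun ε hε => by
    refine (aux_gauss1 n (c / ε) (by positivity) u).mono'
      ((hpm ε).smul (by fun_prop)).aestronglyMeasurable
      (Eventually.of_forall fun y => ?_)
    rw [norm_smul, Real.norm_of_nonneg (hp0 ε y), mul_comm]
    have := hpb ε hε y
    gcongr
  have hZ : ∀ η > 0, ∃ m > 0, ∀ ε > 0, m * Real.exp (-(η / ε)) ≤ ∫ y, p ε y := by
    intro η hη
    have hset : ∀ ε > 0, {y | Real.exp (-(η / ε)) ≤ p ε y} = {y | y ∈ D ∧ G y ≤ η} := by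
      intro ε hε
      ext y
      by_cases hy : y ∈ D
      · simp [hp, hy, div_le_div_iff_of_pos_right hε]
      · simp [hp, hy, Real.exp_pos]
    refine ⟨volume.real {y | y ∈ D ∧ G y ≤ η}, ?_, fun ε hε => ?_⟩
    · refine ENNReal.toReal_pos (hpos η hη).ne' ?_
      rw [← hset 1 one_pos]
      exact ((hpi 1 one_pos).measure_ge_lt_top (Real.exp_pos _)).ne
    · have := mul_meas_ge_le_integral_of_nonneg (Eventually.of_forall (hp0 ε)) (hpi ε hε)
        (Real.exp (-(η / ε)))
      rw [hset ε hε] at this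
      linarith
  set C := ∫ y : EuclideanSpace ℝ (Fin n), ‖y - u‖ * Real.exp (-(c * ‖y - u‖ ^ 2)) with hC
  have hC0 : 0 ≤ C := integral_nonneg fun y => by positivity
  rw [Metric.tendsto_nhds]
  intro r hr
  set δ := r / 2 with hδ
  have hδ0 : 0 < δ := by positivity
  obtain ⟨m, hm, hmZ⟩ := hZ (c * δ ^ 2 / 2) (by positivity)
  have hlim : Tendsto (fun ε : ℝ => C * Real.exp (c * δ ^ 2) / m *
      Real.exp (-(c * δ ^ 2 / 2 * ε⁻¹))) (𝓝[>] 0) (𝓝 (C * Real.exp (c * δ ^ 2) / m * 0)) := by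
    refine Tendsto.const_mul _ (Real.tendsto_exp_neg_atTop_nhds_zero.comp ?_)
    exact Tendsto.const_mul_atTop (by positivity) tendsto_inv_nhdsGT_zero
  rw [mul_zero] at hlim
  filter_upwards [hlim.eventually_lt_const hδ0, self_mem_nhdsWithin,
    nhdsWithin_le_nhds (Iio_mem_nhds (zero_lt_one (α := ℝ)))] with ε h1 h2 h3
  have hε : 0 < ε := h2
  have hε1 : ε < 1 := h3
  have hZ1 := hmZ ε hε
  have hZpos : 0 < ∫ y, p ε y := lt_of_lt_of_le (by positivity) hZ1
  set Z := ∫ y, p ε y with hZdef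
  have heq : (∫ y, p ε y • y) = Z • u + ∫ y, p ε y • (y - u) := by
    rw [hZdef, ← integral_smul_const, ← integral_add ((hpi ε hε).smul_const u) (hpi1 ε hε)]
    congr 1 with y : 1
    rw [← smul_add]
    congr 1
    abel
  have hpt : ∀ y, ‖p ε y • (y - u)‖ ≤ δ * p ε y + Real.exp (-((ε⁻¹ - 1) * (c * δ ^ 2))) *
      (‖y - u‖ * Real.exp (-(c * ‖y - u‖ ^ 2))) := by
    intro y
    rw [norm_smul, Real.norm_of_nonneg (hp0 ε y)]
    have hpy := hp0 ε y
    by_cases hy : ‖y - u‖ ≤ δ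
    · have : p ε y * ‖y - u‖ ≤ δ * p ε y := by nlinarith
      have : 0 ≤ Real.exp (-((ε⁻¹ - 1) * (c * δ ^ 2))) *
        (‖y - u‖ * Real.exp (-(c * ‖y - u‖ ^ 2))) := by positivity
      linarith
    · push Not at hy
      have hle : p ε y ≤ Real.exp (-((ε⁻¹ - 1) * (c * δ ^ 2))) *
          Real.exp (-(c * ‖y - u‖ ^ 2)) := by
        by_cases hyD : y ∈ D
        · simp only [hp, Set.indicator_of_mem hyD]
          rw [← Real.exp_add]
          apply Real.exp_le_exp.2
          have hg := hGc y hyD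
          have h5 : c * δ ^ 2 ≤ c * ‖y - u‖ ^ 2 := by gcongr
          have h6 : 0 ≤ ε⁻¹ - 1 := by
            have := (one_le_inv₀ hε).2 hε1.le
            linarith
          have h7 : (ε⁻¹ - 1) * (c * δ ^ 2) ≤ (ε⁻¹ - 1) * G y := by
            gcongr
            linarith
          have h8 : G y / ε = (ε⁻¹ - 1) * G y + G y := by
            field_simp; ring
          rw [h8]
          linarith
        · simp only [hp, Set.indicator_of_notMem hyD]
          positivity
      have := mul_le_mul_of_nonneg_right hle (norm_nonneg (y - u))
      have : 0 ≤ δ * p ε y := by positivity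
      nlinarith
  have hbound : ‖∫ y, p ε y • (y - u)‖ ≤
      δ * Z + Real.exp (-((ε⁻¹ - 1) * (c * δ ^ 2))) * C := by
    rw [hZdef, hC, ← integral_const_mul, ← integral_const_mul,
      ← integral_add ((hpi ε hε).const_mul _) ((aux_gauss1 n c hc u).const_mul _)]
    exact norm_integral_le_of_norm_le (((hpi ε hε).const_mul _).add
      ((aux_gauss1 n c hc u).const_mul _)) (Eventually.of_forall hpt)
  rw [heq, smul_add, smul_smul, inv_mul_cancel₀ hZpos.ne', one_smul, dist_eq_norm,
    add_sub_cancel_left, norm_smul, Real.norm_of_nonneg (by positivity)]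
  rw [inv_mul_lt_iff₀ hZpos]
  refine hbound.trans_lt ?_
  have h9 : Real.exp (-((ε⁻¹ - 1) * (c * δ ^ 2))) * C < δ * Z := by
    have h10 : Real.exp (-((ε⁻¹ - 1) * (c * δ ^ 2))) * C =
      (C * Real.exp (c * δ ^ 2) / m * Real.exp (-(c * δ ^ 2 / 2 * ε⁻¹))) *
        (m * Real.exp (-(c * δ ^ 2 / 2 / ε))) := by
      have : Real.exp (-((ε⁻¹ - 1) * (c * δ ^ 2))) = Real.exp (c * δ ^ 2) *
        Real.exp (-(c * δ ^ 2 / 2 * ε⁻¹)) * Real.exp (-(c * δ ^ 2 / 2 / ε)) := by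
        rw [← Real.exp_add, ← Real.exp_add]; congr 1; field_simp; ring
      rw [this]; field_simp
    rw [h10]
    calc _ < δ * (m * Real.exp (-(c * δ ^ 2 / 2 / ε))) := by gcongr
      _ ≤ _ := by gcongr
  have : Z * r = δ * Z + δ * Z := by rw [hδ]; ring
  linarith

lemma aux_norm (n : ℕ) (x u w : EuclideanSpace ℝ (Fin n)) (a b : ℝ) (hab : a + b = 1) :
    ‖x - (a • u + b • w)‖ ^ 2 = a * ‖x - u‖ ^ 2 + b * ‖x - w‖ ^ 2 - a * b * ‖w - u‖ ^ 2 := by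
  have h1 : x - (a • u + b • w) = a • (x - u) + b • (x - w) := by
    have : x = a • x + b • x := by rw [← add_smul, hab, one_smul]
    nth_rewrite 1 [this]
    rw [smul_sub, smul_sub]; abel
  have h2 : w - u = (x - u) - (x - w) := by abel
  rw [h1, h2, norm_add_sq_real, norm_sub_sq_real (x - u) (x - w), norm_smul, norm_smul, inner_smul_left,
    inner_smul_right, mul_pow, mul_pow, Real.norm_eq_abs, Real.norm_eq_abs, sq_abs, sq_abs]
  have : b = 1 - a := by linarith
  subst this
  simp only [conj_trivial]
  ring

/-- For every `x ∈ ℝⁿ` and `t > 0`, `y ↦ ‖x−y‖²/(2t) + J(y)` has a unique minimizer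
`u_MAP(x,t)` over `ℝⁿ`, and the posterior mean estimate converges to it in the
vanishing-noise limit: `lim_{ε→0⁺} u_PM(x,t,ε) = u_MAP(x,t)`. -/
theorem postMean_tendsto_map_estimate (n : ℕ) (hn : 1 ≤ n)
    (J : EuclideanSpace ℝ (Fin n) → EReal)
    (hJ_proper_bot : ∀ y, J y ≠ ⊥)
    (hJ_lsc : LowerSemicontinuous J)
    (hJ_convex : ∀ y₁ y₂ : EuclideanSpace ℝ (Fin n), ∀ a b : ℝ, 0 ≤ a → 0 ≤ b → a + b = 1 →
      J (a • y₁ + b • y₂) ≤ (a : EReal) * J y₁ + (b : EReal) * J y₂)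
    (hJ_int : (interior {y : EuclideanSpace ℝ (Fin n) | J y ≠ ⊤}).Nonempty)
    (hJ_inf : (⨅ y : EuclideanSpace ℝ (Fin n), J y) = (0 : EReal))
    (x : EuclideanSpace ℝ (Fin n)) (t : ℝ) (ht : 0 < t) :
    ∃ uMAP : EuclideanSpace ℝ (Fin n),
      (∀ y : EuclideanSpace ℝ (Fin n),
        (((‖x - uMAP‖ ^ 2 / (2 * t) : ℝ)) : EReal) + J uMAP
          ≤ (((‖x - y‖ ^ 2 / (2 * t) : ℝ)) : EReal) + J y) ∧
      (∀ u' : EuclideanSpace ℝ (Fin n),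
        (∀ y : EuclideanSpace ℝ (Fin n),
          (((‖x - u'‖ ^ 2 / (2 * t) : ℝ)) : EReal) + J u'
            ≤ (((‖x - y‖ ^ 2 / (2 * t) : ℝ)) : EReal) + J y) → u' = uMAP) ∧
      Tendsto (fun ε : ℝ => postMean n J x t ε) (𝓝[>] (0 : ℝ)) (𝓝 uMAP) := by
  have hJ0 : ∀ y, 0 ≤ J y := fun y => hJ_inf ▸ iInf_le J y
  set D : Set (EuclideanSpace ℝ (Fin n)) := {y | J y ≠ ⊤} with hDdef
  set j : EuclideanSpace ℝ (Fin n) → ℝ := fun y => (J y).toReal with hj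
  have hjc : ∀ y ∈ D, J y = ((j y : ℝ) : EReal) := fun y hy =>
    (EReal.coe_toReal hy (hJ_proper_bot y)).symm
  have hj0 : ∀ y, 0 ≤ j y := fun y => EReal.toReal_nonneg (hJ0 y)
  set F : EuclideanSpace ℝ (Fin n) → ℝ := fun y => ‖x - y‖ ^ 2 / (2 * t) + j y with hF
  have hFc : ∀ y ∈ D, (((‖x - y‖ ^ 2 / (2 * t) : ℝ)) : EReal) + J y = ((F y : ℝ) : EReal) := by
    intro y hy
    rw [hjc y hy, ← EReal.coe_add]
  have hFt : ∀ y, y ∉ D → (((‖x - y‖ ^ 2 / (2 * t) : ℝ)) : EReal) + J y = ⊤ := by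
    intro y hy
    have : J y = ⊤ := by simpa [hDdef] using hy
    rw [this, EReal.coe_add_top]
  have hconv : ∀ y₁ ∈ D, ∀ y₂ ∈ D, ∀ a b : ℝ, 0 ≤ a → 0 ≤ b → a + b = 1 →
      a • y₁ + b • y₂ ∈ D ∧ F (a • y₁ + b • y₂) ≤
        a * F y₁ + b * F y₂ - a * b * ‖y₂ - y₁‖ ^ 2 / (2 * t) := by
    intro y₁ h₁ y₂ h₂ a b ha hb hab
    have h := hJ_convex y₁ y₂ a b ha hb hab
    rw [hjc _ h₁, hjc _ h₂, ← EReal.coe_mul, ← EReal.coe_mul, ← EReal.coe_add] at h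
    have hm : a • y₁ + b • y₂ ∈ D := ne_top_of_le_ne_top (EReal.coe_ne_top _) h
    refine ⟨hm, ?_⟩
    rw [hjc _ hm, EReal.coe_le_coe_iff] at h
    simp only [hF]
    rw [aux_norm n x y₁ y₂ a b hab]
    have : (a * ‖x - y₁‖ ^ 2 + b * ‖x - y₂‖ ^ 2 - a * b * ‖y₂ - y₁‖ ^ 2) / (2 * t) =
      a * (‖x - y₁‖ ^ 2 / (2 * t)) + b * (‖x - y₂‖ ^ 2 / (2 * t)) -
        a * b * ‖y₂ - y₁‖ ^ 2 / (2 * t) := by ring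
    rw [this]
    linarith
  have hDvol : 0 < volume D := by
    have := (isOpen_interior (s := D)).measure_pos volume hJ_int
    exact this.trans_le (measure_mono interior_subset)
  obtain ⟨y0, hy0i⟩ := hJ_int
  have hy0 : y0 ∈ D := interior_subset hy0i
  have hex : ∃ u ∈ D, ∀ y, (((‖x - u‖ ^ 2 / (2 * t) : ℝ)) : EReal) + J u
          ≤ (((‖x - y‖ ^ 2 / (2 * t) : ℝ)) : EReal) + J y := by
    have hlsc : LowerSemicontinuous
        (fun y => (((‖x - y‖ ^ 2 / (2 * t) : ℝ)) : EReal) + J y) := by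
      refine LowerSemicontinuous.add' (Continuous.lowerSemicontinuous ?_) hJ_lsc fun y =>
        EReal.continuousAt_add (Or.inl (EReal.coe_ne_top _)) (Or.inl (EReal.coe_ne_bot _))
      exact continuous_coe_real_ereal.comp (by fun_prop)
    have hF0 : 0 ≤ F y0 := by
      have := hj0 y0
      simp only [hF]; positivity
    have hR : ∀ y, ‖x - y‖ ^ 2 / (2 * t) ≤ F y0 → y ∈ Metric.closedBall x (√(2 * t * F y0)) := by
      intro y hy
      rw [Metric.mem_closedBall, dist_comm, dist_eq_norm]
      apply Real.le_sqrt_of_sq_le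
      rw [div_le_iff₀ (by positivity)] at hy
      linarith
    have hy0B := hR y0 (by have := hj0 y0; simp only [hF]; linarith)
    obtain ⟨u, huB, hu⟩ := (hlsc.lowerSemicontinuousOn _).exists_isMinOn ⟨y0, hy0B⟩
      (isCompact_closedBall x (√(2 * t * F y0)))
    have huy0 := hu hy0B
    simp only [Set.mem_ofPred_eq] at huy0
    have huD : u ∈ D := by
      by_contra hcon
      rw [hFt u hcon, hFc y0 hy0] at huy0
      exact EReal.coe_ne_top _ (top_le_iff.1 huy0)
    refine ⟨u, huD, fun y => ?_⟩
    by_cases hyB : y ∈ Metric.closedBall x (√(2 * t * F y0))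
    · exact hu hyB
    · refine huy0.trans ?_
      by_cases hyD : y ∈ D
      · rw [hFc y0 hy0, hFc y hyD, EReal.coe_le_coe_iff]
        by_contra hcon
        refine hyB (hR y ?_)
        have := hj0 y
        simp only [hF] at hcon ⊢
        linarith
      · rw [hFt y hyD]; exact le_top
  obtain ⟨u, huD, hu⟩ := hex
  have huF : ∀ y ∈ D, F u ≤ F y := by
    intro y hy
    have := hu y
    rwa [hFc u huD, hFc y hy, EReal.coe_le_coe_iff] at this
  have hgrow : ∀ y ∈ D, 1 / (4 * t) * ‖y - u‖ ^ 2 ≤ F y - F u := by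
    intro y hy
    obtain ⟨hm, h⟩ := hconv u huD y hy (1 / 2) (1 / 2) (by norm_num) (by norm_num) (by norm_num)
    have h2 := huF _ hm
    have h3 : 1 / 2 * (1 / 2) * ‖y - u‖ ^ 2 / (2 * t) = 1 / 2 * (1 / (4 * t) * ‖y - u‖ ^ 2) := by
      field_simp; ring
    rw [h3] at h
    linarith
  refine ⟨u, hu, ?_, ?_⟩
  · intro u' hu'
    have h1 := hu' u
    have hu'D : u' ∈ D := by
      by_contra hcon
      rw [hFt u' hcon, hFc u huD] at h1
      exact EReal.coe_ne_top _ (top_le_iff.1 h1)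
    rw [hFc u' hu'D, hFc u huD, EReal.coe_le_coe_iff] at h1
    have h2 := hgrow u' hu'D
    have h3 : 1 / (4 * t) * ‖u' - u‖ ^ 2 ≤ 0 := by linarith
    have h4 : ‖u' - u‖ ^ 2 ≤ 0 := by
      by_contra hcon
      push Not at hcon
      have : 0 < 1 / (4 * t) * ‖u' - u‖ ^ 2 := by positivity
      linarith
    have h5 : ‖u' - u‖ = 0 := pow_eq_zero_iff two_ne_zero |>.1 (le_antisymm h4 (sq_nonneg _))
    exact sub_eq_zero.1 (norm_eq_zero.1 h5)
  · have hJm : Measurable J := hJ_lsc.measurable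
    have hDm : MeasurableSet D := (hJm (measurableSet_singleton ⊤)).compl
    have hFm : Measurable F := by
      have : Measurable j := hJm.ereal_toReal
      simp only [hF]
      fun_prop
    have hpos : ∀ η > 0, 0 < volume {y | y ∈ D ∧ F y - F u ≤ η} := by
      intro η hη
      obtain ⟨M, hM⟩ : ∃ M : ℕ, 0 < volume {y | y ∈ D ∧ F y - F u ≤ M} := by
        by_contra hcon
        push Not at hcon
        have h0 : volume (⋃ M : ℕ, {y | y ∈ D ∧ F y - F u ≤ M}) = 0 :=
          measure_iUnion_null fun M => le_antisymm (hcon M) zero_le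
        refine hDvol.ne' (measure_mono_null (fun y hy => ?_) h0)
        obtain ⟨M, hM⟩ := exists_nat_ge (F y - F u)
        exact Set.mem_iUnion.2 ⟨M, hy, hM⟩
      obtain ⟨s, hs0, hs1, hsM⟩ : ∃ s : ℝ, 0 < s ∧ s ≤ 1 ∧ s * M ≤ η := by
        refine ⟨min 1 (η / (M + 1)), by positivity, min_le_left _ _, ?_⟩
        calc min 1 (η / (M + 1)) * M ≤ η / (M + 1) * (M + 1) := by
              gcongr
              · exact min_le_right _ _
              · linarith
          _ = η := by field_simp
      have hmeas := Measure.addHaar_image_homothety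
        (volume : Measure (EuclideanSpace ℝ (Fin n))) u s {y | y ∈ D ∧ F y - F u ≤ M}
      have hp : 0 < volume (AffineMap.homothety u s '' {y | y ∈ D ∧ F y - F u ≤ M}) := by
        rw [hmeas]
        refine ENNReal.mul_pos ?_ hM.ne'
        rw [Ne, ENNReal.ofReal_eq_zero, not_le]
        positivity
      refine hp.trans_le (measure_mono ?_)
      rintro _ ⟨y, ⟨hy, hyM⟩, rfl⟩
      have he : AffineMap.homothety u s y = (1 - s) • u + s • y := by
        rw [AffineMap.homothety_apply, vsub_eq_sub, vadd_eq_add, smul_sub, sub_smul, one_smul]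
        abel
      rw [he]
      obtain ⟨hm, h⟩ := hconv u huD y hy (1 - s) s (by linarith) hs0.le (by ring)
      refine ⟨hm, ?_⟩
      have h5 : 0 ≤ (1 - s) * s * ‖y - u‖ ^ 2 / (2 * t) := by
        have : 0 ≤ 1 - s := by linarith
        positivity
      have h6 : s * (F y - F u) ≤ s * M := by gcongr
      nlinarith
    have hcore := aux_core n D hDm (fun y => F y - F u) (hFm.sub_const _) u (1 / (4 * t))
      (by positivity) hgrow hpos
    refine hcore.congr fun ε => ?_
    have hh : ∀ y, heatIntegrand n J x t ε y = Real.exp (-(F u / ε)) *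
        D.indicator (fun y => Real.exp (-((F y - F u) / ε))) y := by
      intro y
      by_cases hy : y ∈ D
      · rw [Set.indicator_of_mem hy, ← Real.exp_add, heatIntegrand, if_neg hy]
        congr 1
        simp only [hF, hj]
        ring
      · rw [Set.indicator_of_notMem hy, mul_zero, heatIntegrand, if_pos (not_not.1 hy)]
    simp only [postMean, partitionFn, hh, mul_smul]
    rw [integral_const_mul, integral_smul, smul_smul, mul_inv, mul_right_comm,
      inv_mul_cancel₀ (Real.exp_pos _).ne', one_mul]
end

section
/- Suppose in addition that J is strongly convex with parameter m ≥ 0 (the case m = 0 being plain convexity). Then for every x ∈ ℝⁿ, t > 0 and ε > 0, the MAP and posterior mean estimates satisfy ‖u_MAP(x,t) − u_PM(x,t,ε)‖² ≤ ntε/(1 + mt), where u_MAP(x,t) is the unique minimizer of y ↦ ‖x−y‖²/(2t) + J(y) over ℝⁿ. -/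
open scoped Topology
open Filter MeasureTheory

namespace MapPM

lemma integrable_gauss {n : ℕ} {c : ℝ} (hc : 0 < c) :
    Integrable (fun y : EuclideanSpace ℝ (Fin n) => Real.exp (-c * ‖y‖ ^ 2)) := by
  by_contra h
  have h1 := GaussianFourier.integral_rexp_neg_mul_sq_norm (V := EuclideanSpace ℝ (Fin n)) hc
  rw [integral_undef h] at h1
  have : 0 < (Real.pi / c) ^ (Module.finrank ℝ (EuclideanSpace ℝ (Fin n)) / 2 : ℝ) := by
    positivity
  linarith

lemma integrable_w {n : ℕ} {c : ℝ} (hc : 0 < c) (w : EuclideanSpace ℝ (Fin n) → ℝ)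
    (hw : Measurable w) (h0 : ∀ y, 0 ≤ w y) (h1 : ∀ y, w y ≤ Real.exp (-c * ‖y‖ ^ 2)) :
    Integrable w := by
  refine (integrable_gauss (n := n) hc).mono' hw.aestronglyMeasurable (ae_of_all _ fun y => ?_)
  rw [Real.norm_of_nonneg (h0 y)]
  exact h1 y

lemma integrable_w_sq {n : ℕ} {c : ℝ} (hc : 0 < c) (w : EuclideanSpace ℝ (Fin n) → ℝ)
    (hw : Measurable w) (h0 : ∀ y, 0 ≤ w y) (h1 : ∀ y, w y ≤ Real.exp (-c * ‖y‖ ^ 2)) :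
    Integrable (fun y => w y * ‖y‖ ^ 2) := by
  refine ((integrable_gauss (n := n) (half_pos hc)).const_mul (2 / c)).mono'
    (by fun_prop) (ae_of_all _ fun y => ?_)
  rw [Real.norm_of_nonneg (mul_nonneg (h0 y) (by positivity))]
  have h2 : c / 2 * ‖y‖ ^ 2 ≤ Real.exp (c / 2 * ‖y‖ ^ 2) := by
    linarith [Real.add_one_le_exp (c / 2 * ‖y‖ ^ 2)]
  have h3 : Real.exp (-c * ‖y‖ ^ 2) * Real.exp (c / 2 * ‖y‖ ^ 2)
      = Real.exp (-(c / 2) * ‖y‖ ^ 2) := by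
    rw [← Real.exp_add]; congr 1; ring
  calc w y * ‖y‖ ^ 2 ≤ Real.exp (-c * ‖y‖ ^ 2) * ‖y‖ ^ 2 := by gcongr; exact h1 y
    _ = (2 / c) * (Real.exp (-c * ‖y‖ ^ 2) * (c / 2 * ‖y‖ ^ 2)) := by field_simp
    _ ≤ (2 / c) * (Real.exp (-c * ‖y‖ ^ 2) * Real.exp (c / 2 * ‖y‖ ^ 2)) := by gcongr
    _ = _ := by rw [h3]

lemma second_moment {n : ℕ} {c : ℝ} (w : EuclideanSpace ℝ (Fin n) → ℝ)
    (hi : Integrable w) (hi2 : Integrable (fun y => w y * ‖y‖ ^ 2))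
    (hs : ∀ s : ℝ, 0 < s → s < 1 → ∀ y, w y * (1 + (1 - s) * (1 + s) * (c * ‖y‖ ^ 2)) ≤ w (s • y)) :
    2 * c * ∫ y, w y * ‖y‖ ^ 2 ≤ n * ∫ y, w y := by
  set Z := ∫ y, w y with hZ
  set M := ∫ y, w y * ‖y‖ ^ 2 with hM
  have key : ∀ s : ℝ, 0 < s → s < 1 →
      s ^ n * ((1 + s) * (c * M)) ≤ (∑ i ∈ Finset.range n, s ^ i) * Z := by
    intro s h0 h1
    have e1 : ∫ y, w (s • y) = (s ^ n)⁻¹ * Z := by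
      have := Measure.integral_comp_smul_of_nonneg (μ := volume) w s (hR := h0.le)
      simpa using this
    have e2 : ∫ y, w y * (1 + (1 - s) * (1 + s) * (c * ‖y‖ ^ 2))
        = Z + (1 - s) * (1 + s) * c * M := by
      rw [hZ, hM, ← integral_const_mul, ← integral_add hi (hi2.const_mul _)]
      congr 1; ext y; ring
    have e3 : ∫ y, w y * (1 + (1 - s) * (1 + s) * (c * ‖y‖ ^ 2)) ≤ ∫ y, w (s • y) := by
      refine integral_mono ?_ (hi.comp_smul h0.ne') (hs s h0 h1)
      refine (hi.add (hi2.const_mul ((1 - s) * (1 + s) * c))).congr (ae_of_all _ fun y => ?_)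
      simp only [Pi.add_apply]; ring
    rw [e1, e2] at e3
    have hsn : 0 < s ^ n := by positivity
    have e4 : s ^ n * (Z + (1 - s) * (1 + s) * c * M) ≤ Z := by
      have := mul_le_mul_of_nonneg_left e3 hsn.le
      rwa [mul_inv_cancel_left₀ hsn.ne'] at this
    have e5 := geom_sum_mul_neg s n
    have e6 : (1 - s) * (s ^ n * ((1 + s) * (c * M)))
        ≤ (1 - s) * ((∑ i ∈ Finset.range n, s ^ i) * Z) := by
      have : (1 - s) * ((∑ i ∈ Finset.range n, s ^ i) * Z) = (1 - s ^ n) * Z := by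
        rw [← e5]; ring
      rw [this]; linarith
    exact le_of_mul_le_mul_left e6 (by linarith)
  have t1 : Tendsto (fun s : ℝ => s ^ n * ((1 + s) * (c * M))) (𝓝[<] 1)
      (𝓝 (1 ^ n * ((1 + 1) * (c * M)))) :=
    ((by fun_prop : Continuous fun s : ℝ => s ^ n * ((1 + s) * (c * M))).tendsto 1).mono_left
      nhdsWithin_le_nhds
  have t2 : Tendsto (fun s : ℝ => (∑ i ∈ Finset.range n, s ^ i) * Z) (𝓝[<] 1)
      (𝓝 ((∑ i ∈ Finset.range n, 1 ^ i) * Z)) :=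
    ((by fun_prop : Continuous fun s : ℝ => (∑ i ∈ Finset.range n, s ^ i) * Z).tendsto 1).mono_left
      nhdsWithin_le_nhds
  have := le_of_tendsto_of_tendsto t1 t2 (by
    filter_upwards [Ioo_mem_nhdsLT (show (0 : ℝ) < 1 by norm_num)] with s h
    exact key s h.1 h.2)
  simp at this
  linarith

lemma integrable_w_smul {n : ℕ} (w : EuclideanSpace ℝ (Fin n) → ℝ) (hw : Measurable w)
    (h0 : ∀ y, 0 ≤ w y)
    (hi : Integrable w) (hi2 : Integrable (fun y => w y * ‖y‖ ^ 2)) :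
    Integrable (fun y => w y • y) := by
  refine (hi.add hi2).mono' (by fun_prop) (ae_of_all _ fun y => ?_)
  rw [norm_smul, Real.norm_of_nonneg (h0 y), Pi.add_apply]
  nlinarith [h0 y, mul_nonneg (h0 y) (sq_nonneg (‖y‖ - 1)), mul_nonneg (h0 y) (sq_nonneg ‖y‖)]

lemma mean_bound {n : ℕ} {c : ℝ} (hc : 0 < c) (w : EuclideanSpace ℝ (Fin n) → ℝ)
    (hw : Measurable w) (h0 : ∀ y, 0 ≤ w y)
    (hi : Integrable w) (hi2 : Integrable (fun y => w y * ‖y‖ ^ 2))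
    (hs : ∀ s : ℝ, 0 < s → s < 1 → ∀ y, w y * (1 + (1 - s) * (1 + s) * (c * ‖y‖ ^ 2)) ≤ w (s • y))
    (hZ : 0 < ∫ y, w y) :
    ‖(∫ y, w y)⁻¹ • ∫ y, w y • y‖ ^ 2 ≤ n / (2 * c) := by
  have h2 := second_moment w hi hi2 hs
  have hi1 := integrable_w_smul w hw h0 hi hi2
  set Z := ∫ y, w y with hZd
  set M := ∫ y, w y * ‖y‖ ^ 2 with hM
  set V := ∫ y, w y • y with hV
  set p := Z⁻¹ • V with hp
  have hVp : V = Z • p := by rw [hp, smul_inv_smul₀ hZ.ne']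
  have hin : Integrable (fun y => inner ℝ p (w y • y)) := hi1.const_inner p
  have e1 : ∫ y, inner ℝ p (w y • y) = Z * ‖p‖ ^ 2 := by
    rw [integral_inner hi1 p, ← hV, hVp, inner_smul_right, real_inner_self_eq_norm_sq]
  have e2 : 0 ≤ ∫ y, w y * ‖y - p‖ ^ 2 :=
    integral_nonneg fun y => mul_nonneg (h0 y) (by positivity)
  have hsub : Integrable (fun y => w y * ‖y‖ ^ 2 - 2 * inner ℝ p (w y • y)) :=
    hi2.sub (hin.const_mul 2)
  have e3 : ∫ y, w y * ‖y - p‖ ^ 2 = M - 2 * (∫ y, inner ℝ p (w y • y)) + Z * ‖p‖ ^ 2 := by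
    rw [hM, hZd, ← integral_const_mul, ← integral_sub hi2 (hin.const_mul 2),
      ← integral_mul_const, ← integral_add hsub (hi.mul_const _)]
    congr 1; ext y
    rw [norm_sub_sq_real, inner_smul_right p y (w y), real_inner_comm p y]; ring
  rw [e1] at e3
  rw [le_div_iff₀ (by positivity)]
  have e4 : Z * ‖p‖ ^ 2 ≤ M := by linarith
  have e5 : Z * (‖p‖ ^ 2 * (2 * c)) ≤ Z * n := by
    nlinarith [mul_le_mul_of_nonneg_left e4 (by positivity : 0 ≤ 2 * c)]
  exact le_of_mul_le_mul_left e5 hZ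

lemma norm_conv {E : Type*} [NormedAddCommGroup E] [InnerProductSpace ℝ E] (x y z : E) (a b : ℝ)
    (hab : a + b = 1) :
    ‖x - (a • y + b • z)‖ ^ 2 = a * ‖x - y‖ ^ 2 + b * ‖x - z‖ ^ 2 - a * b * ‖y - z‖ ^ 2 := by
  have h1 : x - (a • y + b • z) = a • (x - y) + b • (x - z) := by
    have : x = (a + b) • x := by rw [hab, one_smul]
    nth_rewrite 1 [this]
    module
  have h2 : y - z = (x - z) - (x - y) := by abel
  rw [h1, h2, norm_add_sq_real, norm_sub_sq_real (x - z), norm_smul, norm_smul,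
    inner_smul_left, inner_smul_right, real_inner_comm (x - y) (x - z), mul_pow, mul_pow,
    Real.norm_eq_abs, Real.norm_eq_abs, sq_abs, sq_abs]
  simp only [conj_trivial]
  obtain rfl : b = 1 - a := by linarith
  ring

lemma exists_min {n : ℕ} (J : EuclideanSpace ℝ (Fin n) → EReal)
    (hlsc : LowerSemicontinuous J) (hnn : ∀ y, 0 ≤ J y)
    (y₀ : EuclideanSpace ℝ (Fin n)) (hy₀ : J y₀ ≠ ⊤)
    (x : EuclideanSpace ℝ (Fin n)) (t : ℝ) (ht : 0 < t) :
    ∃ u, ∀ y, (((‖x - u‖ ^ 2 / (2 * t) : ℝ)) : EReal) + J u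
          ≤ (((‖x - y‖ ^ 2 / (2 * t) : ℝ)) : EReal) + J y := by
  have hbot : ∀ y, J y ≠ ⊥ := fun y h => by have := hnn y; rw [h] at this; simp at this
  have hF : LowerSemicontinuous
      (fun y => (((‖x - y‖ ^ 2 / (2 * t) : ℝ)) : EReal) + J y) := by
    refine LowerSemicontinuous.add' ?_ hlsc ?_
    · refine Continuous.lowerSemicontinuous ?_
      exact continuous_coe_real_ereal.comp (by fun_prop)
    · intro y
      exact EReal.continuousAt_add (Or.inl (EReal.coe_ne_top _)) (Or.inl (EReal.coe_ne_bot _))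
  obtain ⟨j, hj⟩ : ∃ j : ℝ, (j : EReal) = J y₀ := ⟨_, EReal.coe_toReal hy₀ (hbot y₀)⟩
  have hj0 : 0 ≤ j := by have := hnn y₀; rw [← hj] at this; exact_mod_cast this
  set C : ℝ := ‖x - y₀‖ ^ 2 / (2 * t) + j with hC
  have hC0 : 0 ≤ C := by positivity
  set K : Set (EuclideanSpace ℝ (Fin n)) := Metric.closedBall x (Real.sqrt (2 * t * C)) with hK
  have hmem : ∀ y, y ∈ K ↔ ‖x - y‖ ^ 2 / (2 * t) ≤ C := by
    intro y
    rw [hK, Metric.mem_closedBall, dist_comm, dist_eq_norm, Real.le_sqrt (norm_nonneg _) (by positivity),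
      div_le_iff₀ (by positivity), mul_comm C]
  have hy₀K : y₀ ∈ K := by rw [hmem]; linarith
  obtain ⟨u, huK, hu⟩ := LowerSemicontinuousOn.exists_isMinOn ⟨y₀, hy₀K⟩
    (isCompact_closedBall x _) (hF.lowerSemicontinuousOn K)
  refine ⟨u, fun y => ?_⟩
  by_cases hy : y ∈ K
  · exact hu hy
  · have h1 := hu hy₀K
    simp only [Set.mem_ofPred_eq] at h1
    refine h1.trans ?_
    rw [hmem, not_le] at hy
    rw [← hj, ← EReal.coe_add, ← hC]
    calc (C : EReal) ≤ ((‖x - y‖ ^ 2 / (2 * t) : ℝ) : EReal) := by exact_mod_cast hy.le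
      _ = ((‖x - y‖ ^ 2 / (2 * t) : ℝ) : EReal) + 0 := by simp
      _ ≤ _ := by gcongr; exact hnn y

end MapPM

/-- If `J` is strongly convex with parameter `m ≥ 0` (the case `m = 0` being plain
convexity), then for every `x`, `t > 0` and `ε > 0`, the MAP estimate, i.e. the unique
minimizer `u_MAP(x,t)` of `y ↦ ‖x−y‖²/(2t) + J(y)`, and the posterior mean estimate
satisfy `‖u_MAP(x,t) − u_PM(x,t,ε)‖² ≤ ntε/(1 + mt)`. -/
theorem map_postMean_distance_bound (n : ℕ) (hn : 1 ≤ n)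
    (J : EuclideanSpace ℝ (Fin n) → EReal)
    (hJ_proper_bot : ∀ y, J y ≠ ⊥)
    (hJ_lsc : LowerSemicontinuous J)
    (hJ_int : (interior {y : EuclideanSpace ℝ (Fin n) | J y ≠ ⊤}).Nonempty)
    (hJ_inf : (⨅ y : EuclideanSpace ℝ (Fin n), J y) = (0 : EReal))
    (m : ℝ) (hm : 0 ≤ m)
    (hJ_strconv : ∀ y₁ y₂ : EuclideanSpace ℝ (Fin n), ∀ a b : ℝ, 0 ≤ a → 0 ≤ b → a + b = 1 →
      J (a • y₁ + b • y₂)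
        ≤ (a : EReal) * J y₁ + (b : EReal) * J y₂
            - (((m / 2 * a * b * ‖y₁ - y₂‖ ^ 2 : ℝ)) : EReal))
    (x : EuclideanSpace ℝ (Fin n)) (t ε : ℝ) (ht : 0 < t) (hε : 0 < ε) :
    ∃ uMAP : EuclideanSpace ℝ (Fin n),
      (∀ y : EuclideanSpace ℝ (Fin n),
        (((‖x - uMAP‖ ^ 2 / (2 * t) : ℝ)) : EReal) + J uMAP
          ≤ (((‖x - y‖ ^ 2 / (2 * t) : ℝ)) : EReal) + J y) ∧
      (∀ u' : EuclideanSpace ℝ (Fin n),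
        (∀ y : EuclideanSpace ℝ (Fin n),
          (((‖x - u'‖ ^ 2 / (2 * t) : ℝ)) : EReal) + J u'
            ≤ (((‖x - y‖ ^ 2 / (2 * t) : ℝ)) : EReal) + J y) → u' = uMAP) ∧
      ‖uMAP - postMean n J x t ε‖ ^ 2 ≤ n * t * ε / (1 + m * t) := by
  have hnn : ∀ y, 0 ≤ J y := fun y => hJ_inf ▸ iInf_le J y
  obtain ⟨y₀, hy₀⟩ := hJ_int
  obtain ⟨u, hu⟩ := MapPM.exists_min J hJ_lsc hnn y₀ (interior_subset hy₀) x t ht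
  set j : EuclideanSpace ℝ (Fin n) → ℝ := fun y => (J y).toReal with hj
  have hjc : ∀ y, J y ≠ ⊤ → ((j y : ℝ) : EReal) = J y :=
    fun y hy => EReal.coe_toReal hy (hJ_proper_bot y)
  have hj0 : ∀ y, 0 ≤ j y := fun y => EReal.toReal_nonneg (hnn y)
  set F : EuclideanSpace ℝ (Fin n) → ℝ := fun y => ‖x - y‖ ^ 2 / (2 * t) + j y with hF
  have hF0 : ∀ y, 0 ≤ F y := fun y => add_nonneg (by positivity) (hj0 y)
  have hFc : ∀ y, J y ≠ ⊤ →
      (((‖x - y‖ ^ 2 / (2 * t) : ℝ)) : EReal) + J y = ((F y : ℝ) : EReal) := by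
    intro y hy
    rw [← hjc y hy, ← EReal.coe_add]
  have hdom : ∀ v, (∀ y : EuclideanSpace ℝ (Fin n),
        (((‖x - v‖ ^ 2 / (2 * t) : ℝ)) : EReal) + J v
          ≤ (((‖x - y‖ ^ 2 / (2 * t) : ℝ)) : EReal) + J y) → J v ≠ ⊤ := by
    intro v hv h
    have h1 := hv y₀
    rw [hFc y₀ (interior_subset hy₀), h, EReal.coe_add_top, top_le_iff] at h1
    exact EReal.coe_ne_top _ h1
  have hminR : ∀ v, (∀ y : EuclideanSpace ℝ (Fin n),
        (((‖x - v‖ ^ 2 / (2 * t) : ℝ)) : EReal) + J v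
          ≤ (((‖x - y‖ ^ 2 / (2 * t) : ℝ)) : EReal) + J y) → ∀ y, J y ≠ ⊤ → F v ≤ F y := by
    intro v hv y hy
    have h1 := hv y
    rw [hFc v (hdom v hv), hFc y hy] at h1
    exact_mod_cast h1
  have huD := hdom u hu
  have huF := hminR u hu
  set μ : ℝ := 1 / t + m with hμ
  have hμ0 : 0 < μ := by positivity
  have hconv : ∀ y z a b, J y ≠ ⊤ → J z ≠ ⊤ → 0 ≤ a → 0 ≤ b → a + b = 1 →
      J (a • y + b • z) ≠ ⊤ ∧
      F (a • y + b • z) ≤ a * F y + b * F z - μ / 2 * (a * b) * ‖y - z‖ ^ 2 := by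
    intro y z a b hy hz ha hb hab
    have h1 := hJ_strconv y z a b ha hb hab
    rw [← hjc y hy, ← hjc z hz, ← EReal.coe_mul, ← EReal.coe_mul, ← EReal.coe_add,
      ← EReal.coe_sub] at h1
    have h2 : J (a • y + b • z) ≠ ⊤ := fun h => by
      rw [h, top_le_iff] at h1
      exact EReal.coe_ne_top _ h1
    refine ⟨h2, ?_⟩
    rw [← hjc _ h2, EReal.coe_le_coe_iff] at h1
    simp only [hF]
    rw [MapPM.norm_conv x y z a b hab]
    have h3 : (a * ‖x - y‖ ^ 2 + b * ‖x - z‖ ^ 2 - a * b * ‖y - z‖ ^ 2) / (2 * t)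
        = a * (‖x - y‖ ^ 2 / (2 * t)) + b * (‖x - z‖ ^ 2 / (2 * t))
          - (1 / t) / 2 * (a * b) * ‖y - z‖ ^ 2 := by
      field_simp
    rw [h3, hμ]
    linarith
  have hgrow : ∀ y, J y ≠ ⊤ → F u + μ / 2 * ‖y - u‖ ^ 2 ≤ F y := by
    intro y hy
    have h1 : ∀ s : ℝ, 0 < s → s < 1 → F u + μ / 2 * (1 - s) * ‖y - u‖ ^ 2 ≤ F y := by
      intro s h0 h1
      obtain ⟨h2, h3⟩ := hconv y u s (1 - s) hy huD h0.le (by linarith) (by ring)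
      have h4 := huF _ h2
      have h5 : s * (F u + μ / 2 * (1 - s) * ‖y - u‖ ^ 2) ≤ s * F y := by linarith
      exact le_of_mul_le_mul_left h5 h0
    have t1 : Tendsto (fun s : ℝ => F u + μ / 2 * (1 - s) * ‖y - u‖ ^ 2) (𝓝[>] 0)
        (𝓝 (F u + μ / 2 * (1 - 0) * ‖y - u‖ ^ 2)) :=
      ((by fun_prop : Continuous fun s : ℝ =>
        F u + μ / 2 * (1 - s) * ‖y - u‖ ^ 2).tendsto 0).mono_left nhdsWithin_le_nhds
    have := le_of_tendsto t1 (by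
      filter_upwards [Ioo_mem_nhdsGT (show (0 : ℝ) < 1 by norm_num)] with s h
      exact h1 s h.1 h.2)
    simpa using this
  refine ⟨u, hu, ?_, ?_⟩
  · intro v hv
    have h1 := hgrow v (hdom v hv)
    have h2 := hminR v hv u huD
    have h3 : ‖v - u‖ ^ 2 ≤ 0 := by
      have : μ / 2 * ‖v - u‖ ^ 2 ≤ μ / 2 * 0 := by linarith
      exact le_of_mul_le_mul_left this (by positivity)
    have h4 : ‖v - u‖ = 0 := by
      have := le_antisymm h3 (by positivity)
      simpa using this
    exact sub_eq_zero.mp (norm_eq_zero.mp h4)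
  -- the distance bound
  have hheat : ∀ y, J y ≠ ⊤ → heatIntegrand n J x t ε y = Real.exp (-(F y / ε)) := by
    intro y hy
    simp [heatIntegrand, hy, hF, hj]
  have hheat' : ∀ y, J y = ⊤ → heatIntegrand n J x t ε y = 0 := by
    intro y hy
    simp [heatIntegrand, hy]
  have hheat0 : ∀ y, 0 ≤ heatIntegrand n J x t ε y := by
    intro y
    by_cases hy : J y = ⊤
    · rw [hheat' y hy]
    · rw [hheat y hy]; positivity
  have hJm : Measurable J := hJ_lsc.measurable
  have hmeas : Measurable (heatIntegrand n J x t ε) := by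
    unfold heatIntegrand
    refine Measurable.ite (hJm (measurableSet_singleton ⊤)) measurable_const ?_
    have := hJm.ereal_toReal
    fun_prop
  set c : ℝ := μ / (2 * ε) with hc
  have hc0 : 0 < c := by positivity
  set w : EuclideanSpace ℝ (Fin n) → ℝ := fun y => heatIntegrand n J x t ε (u + y) with hw
  have hwm : Measurable w := hmeas.comp (measurable_const_add u)
  have hw0 : ∀ y, 0 ≤ w y := fun y => hheat0 _
  have hwle : ∀ y, w y ≤ Real.exp (-c * ‖y‖ ^ 2) := by
    intro y
    by_cases hy : J (u + y) = ⊤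
    · simp only [hw]; rw [hheat' _ hy]; positivity
    · simp only [hw]; rw [hheat _ hy, Real.exp_le_exp]
      have h1 := hgrow _ hy
      rw [add_sub_cancel_left] at h1
      have h2 : c * ‖y‖ ^ 2 = (μ / 2 * ‖y‖ ^ 2) / ε := by rw [hc]; field_simp
      have h3 : (μ / 2 * ‖y‖ ^ 2) / ε ≤ F (u + y) / ε := by
        gcongr; linarith [hF0 u]
      linarith
  have hi := MapPM.integrable_w hc0 w hwm hw0 hwle
  have hi2 := MapPM.integrable_w_sq hc0 w hwm hw0 hwle
  have hs : ∀ s : ℝ, 0 < s → s < 1 → ∀ y,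
      w y * (1 + (1 - s) * (1 + s) * (c * ‖y‖ ^ 2)) ≤ w (s • y) := by
    intro s h0 h1 y
    by_cases hy : J (u + y) = ⊤
    · have : w y = 0 := hheat' _ hy
      rw [this, zero_mul]; exact hw0 _
    · obtain ⟨h2, h3⟩ := hconv (u + y) u s (1 - s) hy huD h0.le (by linarith) (by ring)
      have h4 : s • (u + y) + (1 - s) • u = u + s • y := by module
      rw [h4] at h2 h3
      have h5 := hgrow _ hy
      rw [add_sub_cancel_left] at h3 h5
      simp only [hw]
      rw [hheat _ hy, hheat _ h2]
      set D : ℝ := (1 - s) * (1 + s) * (c * ‖y‖ ^ 2) with hD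
      have h6 : 1 + D ≤ Real.exp D := by linarith [Real.add_one_le_exp D]
      calc Real.exp (-(F (u + y) / ε)) * (1 + D)
          ≤ Real.exp (-(F (u + y) / ε)) * Real.exp D := by gcongr
        _ = Real.exp (-(F (u + y) / ε) + D) := by rw [Real.exp_add]
        _ ≤ Real.exp (-(F (u + s • y) / ε)) := by
          rw [Real.exp_le_exp]
          have h7 : D = ((1 - s) * (1 + s) * (μ / 2 * ‖y‖ ^ 2)) / ε := by
            rw [hD, hc]; field_simp
          rw [h7, ← neg_div, ← neg_div, ← add_div]
          gcongr
          have h8 := mul_le_mul_of_nonneg_left h5 (by linarith : 0 ≤ 1 - s)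
          linarith
  have hZ : 0 < ∫ y, w y := by
    rw [integral_pos_iff_support_of_nonneg hw0 hi]
    have hsub : (fun y => u + y) ⁻¹' (interior {y | J y ≠ ⊤}) ⊆ Function.support w := by
      intro y hy
      have h1 : J (u + y) ≠ ⊤ := interior_subset hy
      simp only [Function.mem_support, hw]
      rw [hheat _ h1]
      exact (Real.exp_pos _).ne'
    refine lt_of_lt_of_le ?_ (measure_mono hsub)
    refine IsOpen.measure_pos _ (isOpen_interior.preimage (by fun_prop)) ⟨y₀ - u, ?_⟩
    simpa using hy₀
  have hi1 := MapPM.integrable_w_smul w hwm hw0 hi hi2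
  have hmb := MapPM.mean_bound hc0 w hwm hw0 hi hi2 hs hZ
  have hZeq : partitionFn n J x t ε = ∫ y, w y :=
    (integral_add_left_eq_self (heatIntegrand n J x t ε) u).symm
  have hVeq : ∫ y, heatIntegrand n J x t ε y • y = (∫ y, w y) • u + ∫ y, w y • y := by
    rw [← integral_add_left_eq_self (fun y => heatIntegrand n J x t ε y • y) u,
      ← integral_smul_const, ← integral_add (hi.smul_const u) hi1]
    congr 1; ext1 y
    simp only [hw, smul_add]
  have hpm : postMean n J x t ε = u + (∫ y, w y)⁻¹ • ∫ y, w y • y := by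
    rw [postMean, hZeq, hVeq, smul_add, inv_smul_smul₀ hZ.ne']
  rw [hpm, sub_add_cancel_left, norm_neg]
  refine hmb.trans (le_of_eq ?_)
  rw [hc, hμ]
  field_simp
end
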